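/- Suppose q satisfies condition A for x ≥ x₀ and ρ(x) → +∞ as x → +∞, where ρ(x)=Re p(x) − (1/2)|p′(x)/p(x)|. Fix α₀, α₁ ∈ ℂ with |α₀|+|α₁| ≠ 0, and let λ ∈ ℂ be such that there is no nontrivial solution y of −y″+(q−λ)y=0 with y ∈ L₂(ℝ₊) and α₀y(0)+α₁y′(0)=0. Then there exists a compact (completely continuous) bounded linear operator R : L₂(ℝ₊) → L₂(ℝ₊) such that for every f ∈ L₂(ℝ₊), Rf has a representative y which is a solution of −y″+(q−λ)y=f with α₀y(0)+α₁y′(0)=0. -/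

import Mathlib

/-!
Write `p = √q` and let `ω = e^{-i arg q / 2} = conj p / |p|`. For a solution of
`-y'' + (q - λ) y = f` the energy `E = Re (ω y' conj y)` satisfies
`E' ≥ (ρ² - |λ|) |y|² - |f| |y|`: the diagonal terms equal `Re p (|p| |y|² + |y'|² / |p|)`, and the
term coming from `ω'` is at most `|p' / p| |y'| |y|`, which the arithmetic-geometric mean inequality
absorbs; this is where `ρ = Re p - |p' / p| / 2` appears (`energy_pointwise`, `energy_ineq`).

For `f = 0` and `ρ² ≥ 1 + |λ|` the energy is increasing. Solutions vanishing at `n` have zero energy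
at `n`, hence non-positive energy before `n`; a limit point of their normalized Cauchy data gives a
nontrivial solution `φ` with non-positive energy near infinity, and such a solution lies in `L₂`
(`exists_weyl`, `memL2_of_energy`).

Since `λ` is not an eigenvalue, `φ` does not satisfy the boundary condition, so it is independent of
the solution `θ` with Cauchy data `(α₁, -α₀)`, which does. The operator is given by Green's function
`G f = W⁻¹ (φ ∫₀ˣ θ f + θ ∫ₓ^∞ φ f)`, where `W` is the Wronskian. On compact intervals `G f` and its
derivative are bounded by a multiple of the `L₂` norm of `f` by the Cauchy-Schwarz inequality
(`green_bound`).

If `f` vanishes beyond `X` then `G f` is a multiple of `φ` there, so its energy at `X` is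
non-positive, and the energy inequality bounds the mass of `G f` on `{ρ² ≥ M + |λ|}` by a multiple of
`‖f‖² / M`; the multiple does not depend on `X`, so the bound extends to all `f` (`green_tail`).
As `ρ → ∞`, `G` is bounded on `L₂` and the tails of `G f` are small uniformly for `f` in the unit
ball. Together with the uniform Lipschitz bound on compact intervals, this makes `G` a norm limit of
finite rank operators, which sample `G f` on a fine grid (`isCompactOperator_of_eval`).
-/

open MeasureTheory Filter Topology Complex

noncomputable section

/-- The open sector `Π_κ = {z ≠ 0 : arg z ∈ (-π+κ, π-κ)}`. -/
def PiSector (κ : ℝ) : Set ℂ :=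
  {z : ℂ | z ≠ 0 ∧ -Real.pi + κ < z.arg ∧ z.arg < Real.pi - κ}

/-- `f` is locally absolutely continuous on `[a,∞)` with a.e. derivative `f'`:
`f'` is locally integrable there and `f` is recovered from `f'` by integration. -/
def LocACOn (f f' : ℝ → ℂ) (a : ℝ) : Prop :=
  (∀ b, a ≤ b → IntervalIntegrable f' volume a b) ∧
  ∀ x, a ≤ x → f x = f a + ∫ t in a..x, f' t

/-- `y` (with first derivative `y'`) is a solution of `-y'' + q y = f` on `ℝ₊`:
`y, y'` are locally absolutely continuous on `[0,∞)` and the a.e. derivative of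
`y'` equals `q y - f`. -/
def IsSol (q f y y' : ℝ → ℂ) : Prop :=
  LocACOn y y' 0 ∧ LocACOn y' (fun x => q x * y x - f x) 0

/-- `y` is nontrivial on `ℝ₊`. -/
def NontrivialSol (y : ℝ → ℂ) : Prop := ∃ x, 0 ≤ x ∧ y x ≠ 0

/-- membership in the weighted space `L₂(ℝ₊, w)`. -/
def MemL2 (w : ℝ → ℝ) (f : ℝ → ℂ) : Prop :=
  AEStronglyMeasurable f (volume.restrict (Set.Ici (0:ℝ))) ∧
  IntegrableOn (fun x => w x * ‖f x‖ ^ 2) (Set.Ici (0:ℝ)) volume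

/-- the branch `p = √q` with positive real part (principal branch). -/
def sqrtQ (q : ℝ → ℂ) (x : ℝ) : ℂ := (q x) ^ ((1 : ℂ) / 2)

/-- the a.e. derivative of `sqrtQ q`, where `q'` is the a.e. derivative of `q`. -/
def sqrtQD (q q' : ℝ → ℂ) (x : ℝ) : ℂ := q' x / (2 * sqrtQ q x)

/-- the weight `ρ = Re p - (1/2)|p'/p|`. -/
def rho (q q' : ℝ → ℂ) (x : ℝ) : ℝ :=
  (sqrtQ q x).re - (1 / 2) * ‖sqrtQD q q' x / sqrtQ q x‖

/-- Condition A for `q` on `[x₀,∞)` with constant `C`, where `q'` is the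
a.e. derivative of `q`: `q ∈ L¹loc(ℝ₊)`, `q` is locally absolutely continuous
on `[x₀,∞)`, `q` takes values in a sector `Π_κ` on `[x₀,∞)`, the branch
`p = √q` has positive real part there, and
`Re p ≥ C + (1/2)|p'/p|` a.e. on `[x₀,∞)`. -/
def CondA (q q' : ℝ → ℂ) (x₀ C : ℝ) : Prop :=
  LocallyIntegrableOn q (Set.Ici (0:ℝ)) volume ∧
  LocACOn q q' x₀ ∧
  (∃ κ, 0 ≤ κ ∧ ∀ x, x₀ ≤ x → q x ∈ PiSector κ) ∧
  (∀ x, x₀ ≤ x → 0 < (sqrtQ q x).re) ∧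
  0 < C ∧
  ∀ᵐ x : ℝ, x₀ ≤ x → C + (1 / 2) * ‖sqrtQD q q' x / sqrtQ q x‖ ≤ (sqrtQ q x).re

/-- The set `𝒩` of spectral parameters `lam` such that `q - lam` satisfies
condition A for `x ≥ x₁(lam)` for some `x₁(lam) ≥ 0` (note `(q - lam)' = q'`). -/
def NSet (q q' : ℝ → ℂ) : Set ℂ :=
  {lam : ℂ | ∃ x₁ C, 0 ≤ x₁ ∧ CondA (fun x => q x - lam) q' x₁ C}

/-! ### Calculus of locally absolutely continuous functions -/

/-- Absolute continuity passes to any function whose increments are dominated by those of an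
absolutely continuous one. -/
lemma ac_of_dist_le {X Y : Type*} [PseudoMetricSpace X] [PseudoMetricSpace Y]
    {f : ℝ → X} {g : ℝ → Y} {a b K : ℝ}
    (hg : AbsolutelyContinuousOnInterval g a b)
    (h : ∀ x ∈ Set.uIcc a b, ∀ y ∈ Set.uIcc a b, dist (f x) (f y) ≤ K * dist (g x) (g y)) :
    AbsolutelyContinuousOnInterval f a b := by
  rw [absolutelyContinuousOnInterval_iff] at hg ⊢
  intro ε hε
  obtain ⟨δ, hδ, H⟩ := hg (ε / (|K| + 1)) (by positivity)
  refine ⟨δ, hδ, fun E hE hlt => ?_⟩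
  have h1 := H E hE hlt
  calc ∑ i ∈ Finset.range E.1, dist (f (E.2 i).1) (f (E.2 i).2)
      ≤ ∑ i ∈ Finset.range E.1, (|K| + 1) * dist (g (E.2 i).1) (g (E.2 i).2) := by
        refine Finset.sum_le_sum fun i hi => ?_
        obtain ⟨h2, h3⟩ := hE.1 i hi
        refine (h _ h2 _ h3).trans ?_
        have := le_abs_self K
        gcongr
        linarith
    _ = (|K| + 1) * ∑ i ∈ Finset.range E.1, dist (g (E.2 i).1) (g (E.2 i).2) := by
        rw [Finset.mul_sum]
    _ < (|K| + 1) * (ε / (|K| + 1)) := by gcongr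
    _ = ε := by field_simp

lemma LocACOn.intervalIntegrable {f f' : ℝ → ℂ} {a x y : ℝ} (h : LocACOn f f' a) (hx : a ≤ x)
    (hy : a ≤ y) : IntervalIntegrable f' volume x y :=
  (h.1 x hx).symm.trans (h.1 y hy)

lemma LocACOn.sub_eq {f f' : ℝ → ℂ} {a x y : ℝ} (h : LocACOn f f' a) (hx : a ≤ x)
    (hy : a ≤ y) : f y - f x = ∫ t in x..y, f' t := by
  rw [h.2 x hx, h.2 y hy, ← intervalIntegral.integral_interval_sub_left (h.1 y hy) (h.1 x hx)]
  ring

lemma LocACOn.mono {f f' : ℝ → ℂ} {a b : ℝ} (h : LocACOn f f' a) (hab : a ≤ b) :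
    LocACOn f f' b := by
  refine ⟨fun c hc => h.intervalIntegrable hab (hab.trans hc), fun x hx => ?_⟩
  rw [← h.sub_eq hab (hab.trans hx)]; ring

lemma LocACOn.ac {f f' : ℝ → ℂ} {a b : ℝ} (h : LocACOn f f' a) (hab : a ≤ b) :
    AbsolutelyContinuousOnInterval f a b := by
  have h1 : IntervalIntegrable (fun t => ‖f' t‖) volume a b := (h.1 b hab).norm
  refine ac_of_dist_le (K := 1)
    (h1.absolutelyContinuousOnInterval_intervalIntegral (c := a) (by simp)) ?_
  intro x hx y hy
  rw [Set.uIcc_of_le hab] at hx hy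
  rw [dist_comm, dist_eq_norm, h.sub_eq hx.1 hy.1, one_mul, dist_comm, Real.dist_eq,
    intervalIntegral.integral_interval_sub_left (h.intervalIntegrable le_rfl hy.1).norm
      (h.intervalIntegrable le_rfl hx.1).norm]
  exact intervalIntegral.norm_integral_le_abs_integral_norm

lemma LocACOn.continuousOn {f f' : ℝ → ℂ} {a : ℝ} (h : LocACOn f f' a) :
    ContinuousOn f (Set.Ici a) := by
  intro x hx
  have hx' : a ≤ x := hx
  have := (h.ac (b := x + 1) (by linarith)).continuousOn x
    (by rw [Set.uIcc_of_le (by linarith)]; exact ⟨hx', by linarith⟩)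
  rw [Set.uIcc_of_le (by linarith)] at this
  refine this.mono_of_mem_nhdsWithin ?_
  rw [← Set.Ici_inter_Iic]
  exact inter_mem_nhdsWithin _ (Iic_mem_nhds (by linarith))

lemma ae_of_forall_ge {P : ℝ → Prop} {a : ℝ}
    (h : ∀ b, a ≤ b → ∀ᵐ x : ℝ, x ∈ Set.Ioo a b → P x) : ∀ᵐ x : ℝ, a ≤ x → P x := by
  have h1 : ∀ᵐ x : ℝ, ∀ n : ℕ, x ∈ Set.Ioo a (a + n) → P x :=
    ae_all_iff.2 fun n => h _ (by simp)
  have h2 : ∀ᵐ x : ℝ, x ≠ a := by simp [ae_iff, measure_singleton]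
  filter_upwards [h1, h2] with x hx hxa hax
  obtain ⟨n, hn⟩ := exists_nat_gt (x - a)
  exact hx n ⟨lt_of_le_of_ne hax (Ne.symm hxa), by linarith⟩

lemma LocACOn.ae_hasDerivAt {f f' : ℝ → ℂ} {a : ℝ} (h : LocACOn f f' a) :
    ∀ᵐ x : ℝ, a ≤ x → HasDerivAt f (f' x) x := by
  refine ae_of_forall_ge fun b hab => ?_
  filter_upwards [(h.1 b hab).ae_hasDerivAt_integral] with x hx hxab
  rw [Set.uIcc_of_le hab] at hx
  have h1 := (hx ⟨hxab.1.le, hxab.2.le⟩ a ⟨le_rfl, hab⟩).const_add (f a)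
  refine h1.congr_of_eventuallyEq ?_
  filter_upwards [Ioi_mem_nhds hxab.1] with y hy
  exact h.2 y (le_of_lt hy)

/-- The fundamental theorem of calculus: an absolutely continuous function is recovered from its
a.e. derivative. -/
lemma LocACOn.of_ac {g g' : ℝ → ℂ} {a : ℝ}
    (hac : ∀ b, a ≤ b → AbsolutelyContinuousOnInterval g a b)
    (hint : ∀ b, a ≤ b → IntervalIntegrable g' volume a b)
    (hder : ∀ᵐ x : ℝ, a ≤ x → HasDerivAt g (g' x) x) : LocACOn g g' a := by
  refine ⟨hint, fun x hx => ?_⟩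
  have hI : LocACOn (fun x => ∫ t in a..x, g' t) g' a := ⟨hint, fun y _ => by simp⟩
  obtain ⟨c, hc⟩ : ∃ c, ∀ y ∈ Set.uIcc a x, g y - ∫ t in a..y, g' t = c := by
    refine ((hac x hx).sub (hI.ac hx)).const_of_ae_hasDerivAt_zero ?_
    filter_upwards [hder, hI.ae_hasDerivAt] with y h1 h2 hy
    rw [Set.uIcc_of_le hx] at hy
    simpa using (h1 hy.1).sub (h2 hy.1)
  have h1 := hc x (by simp)
  have h2 := hc a (by simp)
  simp only [intervalIntegral.integral_same, sub_zero] at h2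
  rw [h2, ← h1]; ring

lemma ContinuousOn.uIcc_of_Ici {f : ℝ → ℂ} {a b : ℝ} (h : ContinuousOn f (Set.Ici a))
    (hab : a ≤ b) : ContinuousOn f (Set.uIcc a b) := by
  rw [Set.uIcc_of_le hab]; exact h.mono Set.Icc_subset_Ici_self

lemma LocACOn.mul {f f' g g' : ℝ → ℂ} {a : ℝ} (hf : LocACOn f f' a) (hg : LocACOn g g' a) :
    LocACOn (fun x => f x * g x) (fun x => f' x * g x + f x * g' x) a := by
  refine LocACOn.of_ac (fun b hb => ?_) (fun b hb => ?_) ?_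
  · exact (hf.ac hb).smul (hg.ac hb)
  · exact ((hf.1 b hb).mul_continuousOn (hg.continuousOn.uIcc_of_Ici hb)).add
      ((hg.1 b hb).continuousOn_mul (hf.continuousOn.uIcc_of_Ici hb))
  · filter_upwards [hf.ae_hasDerivAt, hg.ae_hasDerivAt] with x h1 h2 hx
    exact (h1 hx).mul (h2 hx)

lemma LocACOn.add {f f' g g' : ℝ → ℂ} {a : ℝ} (hf : LocACOn f f' a) (hg : LocACOn g g' a) :
    LocACOn (fun x => f x + g x) (fun x => f' x + g' x) a := by
  refine ⟨fun b hb => (hf.1 b hb).add (hg.1 b hb), fun x hx => ?_⟩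
  change f x + g x = f a + g a + _
  rw [intervalIntegral.integral_add (hf.1 x hx) (hg.1 x hx), hf.2 x hx, hg.2 x hx]
  ring

lemma LocACOn.const_mul {f f' : ℝ → ℂ} {a : ℝ} (c : ℂ) (hf : LocACOn f f' a) :
    LocACOn (fun x => c * f x) (fun x => c * f' x) a := by
  refine ⟨fun b hb => (hf.1 b hb).const_mul c, fun x hx => ?_⟩
  rw [intervalIntegral.integral_const_mul, ← mul_add, ← hf.2 x hx]

lemma LocACOn.congr {f f' g g' : ℝ → ℂ} {a : ℝ} (hf : LocACOn f f' a)
    (h : ∀ x, a ≤ x → f x = g x) (h' : ∀ x, a ≤ x → f' x = g' x) : LocACOn g g' a := by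
  refine ⟨fun b hb => (hf.1 b hb).congr fun x hx => ?_, fun x hx => ?_⟩
  · rw [Set.uIoc_of_le hb] at hx; exact h' x hx.1.le
  · rw [← h x hx, ← h a le_rfl, hf.2 x hx]
    congr 1
    refine intervalIntegral.integral_congr fun t ht => ?_
    rw [Set.uIcc_of_le hx] at ht; exact h' t ht.1

lemma LocACOn.conj {f f' : ℝ → ℂ} {a : ℝ} (hf : LocACOn f f' a) :
    LocACOn (fun x => (starRingEnd ℂ) (f x)) (fun x => (starRingEnd ℂ) (f' x)) a := by
  refine LocACOn.of_ac (fun b hb => ?_) (fun b hb => ?_) ?_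
  · refine ac_of_dist_le (K := 1) (hf.ac hb) fun x _ y _ => ?_
    rw [one_mul, Complex.dist_conj_conj]
  · have := hf.1 b hb
    exact ⟨(Complex.conjCLE.toContinuousLinearMap.integrable_comp this.1),
      (Complex.conjCLE.toContinuousLinearMap.integrable_comp this.2)⟩
  · filter_upwards [hf.ae_hasDerivAt] with x h1 hx
    exact (Complex.conjCLE.toContinuousLinearMap.hasFDerivAt.comp_hasDerivAt x (h1 hx))

/-- Chain rule for a holomorphic outer function; on the compact image of an interval the outer
function is Lipschitz, so the composition is absolutely continuous. -/
lemma LocACOn.comp {f f' : ℝ → ℂ} {a : ℝ} (hf : LocACOn f f' a) {Φ : ℂ → ℂ} {U : Set ℂ}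
    (hU : IsOpen U) (hΦ : DifferentiableOn ℂ Φ U) (hfU : ∀ x, a ≤ x → f x ∈ U) :
    LocACOn (fun x => Φ (f x)) (fun x => deriv Φ (f x) * f' x) a := by
  have hcf := hf.continuousOn
  refine LocACOn.of_ac (fun b hb => ?_) (fun b hb => ?_) ?_
  · have hK : IsCompact (f '' Set.Icc a b) :=
      isCompact_Icc.image_of_continuousOn (hcf.mono Set.Icc_subset_Ici_self)
    have hloc : LocallyLipschitzOn (f '' Set.Icc a b) Φ := by
      rintro _ ⟨x, hx, rfl⟩
      have : ContDiffAt ℂ 1 Φ (f x) :=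
        ((hΦ.contDiffOn hU).contDiffAt (hU.mem_nhds (hfU x hx.1)))
      obtain ⟨K, t, ht, h⟩ := this.exists_lipschitzOnWith
      exact ⟨K, t, mem_nhdsWithin_of_mem_nhds ht, h⟩
    obtain ⟨K, hKL⟩ := hloc.exists_lipschitzOnWith_of_compact hK
    refine ac_of_dist_le (K := K) (hf.ac hb) fun x hx y hy => ?_
    rw [Set.uIcc_of_le hb] at hx hy
    exact hKL.dist_le_mul _ (Set.mem_image_of_mem f hx) _ (Set.mem_image_of_mem f hy)
  · refine (hf.1 b hb).continuousOn_mul ?_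
    refine ContinuousOn.uIcc_of_Ici ?_ hb
    exact (hΦ.deriv hU).continuousOn.comp hcf fun x hx => hfU x hx
  · filter_upwards [hf.ae_hasDerivAt] with x h1 hx
    exact ((hΦ.differentiableAt (hU.mem_nhds (hfU x hx))).hasDerivAt).comp x (h1 hx)

lemma LocACOn.cexp {f f' : ℝ → ℂ} {a : ℝ} (hf : LocACOn f f' a) :
    LocACOn (fun x => exp (f x)) (fun x => exp (f x) * f' x) a := by
  have := hf.comp isOpen_univ (Complex.differentiable_exp.differentiableOn) (fun x _ => trivial)
  simpa [Complex.deriv_exp] using this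

/-! ### The homogeneous Cauchy problem -/

lemma LocACOn.ofReal_integral {m : ℝ → ℝ} (hm : ∀ b, 0 ≤ b → IntervalIntegrable m volume 0 b) :
    LocACOn (fun t => ((∫ s in (0:ℝ)..t, m s : ℝ) : ℂ)) (fun t => (m t : ℂ)) 0 := by
  refine ⟨fun b hb => ⟨(hm b hb).1.ofReal, (hm b hb).2.ofReal⟩, fun x hx => ?_⟩
  rw [intervalIntegral.integral_ofReal]; simp

lemma integral_exp_weight {m : ℝ → ℝ} (hm : ∀ b, 0 ≤ b → IntervalIntegrable m volume 0 b)
    {x : ℝ} (hx : 0 ≤ x) :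
    IntervalIntegrable (fun t => Real.exp (2 * ∫ s in (0:ℝ)..t, m s) * m t) volume 0 x ∧
    ∫ t in (0:ℝ)..x, Real.exp (2 * ∫ s in (0:ℝ)..t, m s) * m t =
      (Real.exp (2 * ∫ s in (0:ℝ)..x, m s) - 1) / 2 := by
  have h0 := LocACOn.ofReal_integral hm
  have h1 := (h0.const_mul 2).cexp
  have e1 : (fun t : ℝ => exp (2 * ((∫ s in (0:ℝ)..t, m s : ℝ) : ℂ)) * (2 * (m t : ℂ))) =
      fun t : ℝ => ((2 * (Real.exp (2 * ∫ s in (0:ℝ)..t, m s) * m t) : ℝ) : ℂ) := by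
    funext t; push_cast; ring
  rw [e1] at h1
  have hi : IntervalIntegrable
      (fun t => 2 * (Real.exp (2 * ∫ s in (0:ℝ)..t, m s) * m t)) volume 0 x := by
    have := h1.1 x hx
    exact ⟨this.1.re, this.2.re⟩
  have h2 := h1.2 x hx
  rw [intervalIntegral.integral_ofReal] at h2
  have h3 : Real.exp (2 * ∫ s in (0:ℝ)..x, m s) =
      1 + ∫ t in (0:ℝ)..x, 2 * (Real.exp (2 * ∫ s in (0:ℝ)..t, m s) * m t) := by
    have := congrArg Complex.re h2
    simp only [intervalIntegral.integral_same, Complex.ofReal_zero, mul_zero, Complex.exp_zero,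
      Complex.add_re, Complex.one_re, Complex.ofReal_re] at this
    rw [← this, ← Complex.ofReal_re (Real.exp _)]
    push_cast; rfl
  refine ⟨?_, ?_⟩
  · simpa using hi.const_mul (1/2)
  · rw [intervalIntegral.integral_const_mul] at h3
    linarith

/-- Linear estimate behind the contraction: integrating against `g` a function bounded by `r`
times the exponential weight. -/
lemma norm_integral_le_weight {m : ℝ → ℝ} (hm : ∀ b, 0 ≤ b → IntervalIntegrable m volume 0 b)
    {F : ℝ → ℂ} {r : ℝ} (hr : 0 ≤ r)
    (hF : ∀ t, ‖F t‖ ≤ r * (Real.exp (2 * ∫ s in (0:ℝ)..t, m s) * m t)) {x : ℝ} (hx : 0 ≤ x) :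
    Real.exp (-(2 * ∫ s in (0:ℝ)..x, m s)) * ‖∫ t in (0:ℝ)..x, F t‖ ≤ r / 2 := by
  obtain ⟨h1, h2⟩ := integral_exp_weight hm hx
  have h3 : ‖∫ t in (0:ℝ)..x, F t‖ ≤
      ∫ t in (0:ℝ)..x, r * (Real.exp (2 * ∫ s in (0:ℝ)..t, m s) * m t) :=
    intervalIntegral.norm_integral_le_of_norm_le hx (Eventually.of_forall fun t _ => hF t)
      (h1.const_mul r)
  rw [intervalIntegral.integral_const_mul, h2] at h3
  calc Real.exp (-(2 * ∫ s in (0:ℝ)..x, m s)) * ‖∫ t in (0:ℝ)..x, F t‖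
      ≤ Real.exp (-(2 * ∫ s in (0:ℝ)..x, m s)) *
        (r * ((Real.exp (2 * ∫ s in (0:ℝ)..x, m s)) / 2)) := by
        gcongr
        refine h3.trans ?_
        gcongr
        linarith
    _ = r / 2 := by
        have : Real.exp (-(2 * ∫ s in (0:ℝ)..x, m s)) * Real.exp (2 * ∫ s in (0:ℝ)..x, m s) = 1 := by
          rw [← Real.exp_add]; simp
        linear_combination (r / 2) * this

/-- The Cauchy problem at `0` for `-y'' + Q y = 0` with locally integrable `Q` is solvable on all of
`[0, ∞)`. The Picard operator is a contraction on bounded functions once the unknowns are divided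
by the weight `exp (2 ∫₀ˣ (1 + ‖Q‖))`. -/
lemma exists_sol {Q : ℝ → ℂ} (hQ : ∀ b, 0 ≤ b → IntervalIntegrable Q volume 0 b) (a b : ℂ) :
    ∃ y y', IsSol Q 0 y y' ∧ y 0 = a ∧ y' 0 = b := by
  set m : ℝ → ℝ := fun t => 1 + ‖Q t‖ with hmdef
  have hm : ∀ b, 0 ≤ b → IntervalIntegrable m volume 0 b := fun b hb =>
    (_root_.intervalIntegrable_const).add (hQ b hb).norm
  set E : ℝ → ℝ := fun x => Real.exp (2 * ∫ s in (0:ℝ)..x, m s) with hE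
  set En : ℝ → ℝ := fun x => Real.exp (-(2 * ∫ s in (0:ℝ)..x, m s)) with hEn
  have hEE : ∀ x, E x * En x = 1 := fun x => by
    simp only [hE, hEn]; rw [← Real.exp_add]; simp
  have hEpos : ∀ x, 0 < E x := fun x => Real.exp_pos _
  have hEnpos : ∀ x, 0 < En x := fun x => Real.exp_pos _
  have hMc : ContinuousOn (fun x => ∫ s in (0:ℝ)..x, m s) (Set.Ici 0) := by
    exact (Complex.continuous_re.comp_continuousOn
      (LocACOn.ofReal_integral hm).continuousOn).congr fun x _ => by simp
  have hEc : ContinuousOn E (Set.Ici 0) := Real.continuous_exp.comp_continuousOn (hMc.const_mul 2)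
  have hEnc : ContinuousOn En (Set.Ici 0) :=
    Real.continuous_exp.comp_continuousOn (hMc.const_mul 2).neg
  have hEn1 : ∀ x, 0 ≤ x → En x ≤ 1 := fun x hx => by
    rw [hEn, Real.exp_le_one_iff, neg_nonpos]
    refine mul_nonneg zero_le_two (intervalIntegral.integral_nonneg hx fun t _ => ?_)
    positivity
  -- The unknown is the pair of `y` and its derivative divided by the weight `E`, which makes the
  -- Picard map a contraction with constant `1 / 2` on all of `ℝ₊` at once.
  let F1 : (ℝ → ℂ × ℂ) → ℝ → ℂ := fun z t => (E t : ℂ) * (z t).2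
  let F2 : (ℝ → ℂ × ℂ) → ℝ → ℂ := fun z t => Q t * ((E t : ℂ) * (z t).1)
  have hF1b : ∀ (z : ℝ → ℂ × ℂ) (r : ℝ), (∀ t, ‖z t‖ ≤ r) → ∀ t, ‖F1 z t‖ ≤ r * (E t * m t) := by
    intro z r hz t
    have h1 : ‖(z t).2‖ ≤ r := (norm_snd_le _).trans (hz t)
    have h2 : 1 ≤ m t := by simp [hmdef]
    have hr : 0 ≤ r := (norm_nonneg _).trans (hz t)
    calc ‖F1 z t‖ = E t * ‖(z t).2‖ := by simp [F1, abs_of_pos (hEpos t)]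
      _ ≤ E t * r := by gcongr
      _ ≤ r * (E t * m t) := by nlinarith [mul_nonneg (hEpos t).le hr]
  have hF2b : ∀ (z : ℝ → ℂ × ℂ) (r : ℝ), (∀ t, ‖z t‖ ≤ r) → ∀ t, ‖F2 z t‖ ≤ r * (E t * m t) := by
    intro z r hz t
    have h1 : ‖(z t).1‖ ≤ r := (norm_fst_le _).trans (hz t)
    have hr : 0 ≤ r := (norm_nonneg _).trans (hz t)
    calc ‖F2 z t‖ = ‖Q t‖ * (E t * ‖(z t).1‖) := by simp [F2, abs_of_pos (hEpos t)]
      _ ≤ m t * (E t * r) := by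
        have := (hEpos t).le
        gcongr
        simp [hmdef]
      _ = r * (E t * m t) := by ring
  have hF1i : ∀ z : BoundedContinuousFunction ℝ (ℂ × ℂ), ∀ x, 0 ≤ x →
      IntervalIntegrable (F1 z) volume 0 x := fun z x hx => by
    refine ContinuousOn.intervalIntegrable ?_
    refine ContinuousOn.uIcc_of_Ici ?_ hx
    exact (Complex.continuous_ofReal.comp_continuousOn hEc).mul
      (continuous_snd.comp z.continuous).continuousOn
  have hF2i : ∀ z : BoundedContinuousFunction ℝ (ℂ × ℂ), ∀ x, 0 ≤ x →
      IntervalIntegrable (F2 z) volume 0 x := fun z x hx => by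
    refine (hQ x hx).mul_continuousOn ?_
    refine ContinuousOn.uIcc_of_Ici ?_ hx
    exact (Complex.continuous_ofReal.comp_continuousOn hEc).mul
      (continuous_fst.comp z.continuous).continuousOn
  let T0 : (ℝ → ℂ × ℂ) → ℝ → ℂ × ℂ := fun z x =>
    ((En x : ℂ) * (a + ∫ t in (0:ℝ)..x, F1 z t), (En x : ℂ) * (b + ∫ t in (0:ℝ)..x, F2 z t))
  have hT0c : ∀ z : BoundedContinuousFunction ℝ (ℂ × ℂ), ContinuousOn (T0 z) (Set.Ici 0) := by
    intro z
    have c1 : LocACOn (fun x => ∫ t in (0:ℝ)..x, F1 z t) (F1 z) 0 := ⟨hF1i z, fun x _ => by simp⟩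
    have c2 : LocACOn (fun x => ∫ t in (0:ℝ)..x, F2 z t) (F2 z) 0 := ⟨hF2i z, fun x _ => by simp⟩
    have c3 := Complex.continuous_ofReal.comp_continuousOn hEnc
    exact (c3.mul (continuousOn_const.add c1.continuousOn)).prodMk
      (c3.mul (continuousOn_const.add c2.continuousOn))
  have hT0b : ∀ z : BoundedContinuousFunction ℝ (ℂ × ℂ), ∀ x, 0 ≤ x →
      ‖T0 z x‖ ≤ ‖a‖ + ‖b‖ + ‖z‖ := by
    intro z x hx
    have aux : ∀ (c : ℂ) (F : ℝ → ℂ), (∀ t, ‖F t‖ ≤ ‖z‖ * (E t * m t)) →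
        ‖(En x : ℂ) * (c + ∫ t in (0:ℝ)..x, F t)‖ ≤ ‖c‖ + ‖z‖ := by
      intro c F hF
      have h1 := norm_integral_le_weight hm (norm_nonneg z) hF hx
      have h2 : ‖(En x : ℂ)‖ = En x := by simp [abs_of_pos (hEnpos x)]
      rw [norm_mul, h2]
      calc En x * ‖c + ∫ t in (0:ℝ)..x, F t‖
          ≤ En x * (‖c‖ + ‖∫ t in (0:ℝ)..x, F t‖) := by
            have := (hEnpos x).le
            gcongr
            exact norm_add_le _ _
        _ = En x * ‖c‖ + En x * ‖∫ t in (0:ℝ)..x, F t‖ := by ring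
        _ ≤ 1 * ‖c‖ + ‖z‖ / 2 := by
            gcongr
            exact hEn1 x hx
        _ ≤ ‖c‖ + ‖z‖ := by linarith [norm_nonneg z]
    rw [Prod.norm_def, max_le_iff]
    have g1 := aux a (F1 z) (hF1b z _ z.norm_coe_le_norm)
    have g2 := aux b (F2 z) (hF2b z _ z.norm_coe_le_norm)
    exact ⟨g1.trans (by linarith [norm_nonneg b]), g2.trans (by linarith [norm_nonneg a])⟩
  -- Freezing the value at `0` for negative arguments gives functions on all of `ℝ`.
  let T : BoundedContinuousFunction ℝ (ℂ × ℂ) → BoundedContinuousFunction ℝ (ℂ × ℂ) := fun z =>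
    BoundedContinuousFunction.ofNormedAddCommGroup (fun x => T0 z (max x 0))
      ((hT0c z).comp_continuous (continuous_id.max continuous_const)
        fun x => Set.mem_Ici.2 (le_max_right x 0))
      (‖a‖ + ‖b‖ + ‖z‖) (fun x => hT0b z _ (le_max_right _ _))
  have hT : ContractingWith (1/2) T := by
    refine ⟨by norm_num, LipschitzWith.of_dist_le_mul fun z w => ?_⟩
    rw [BoundedContinuousFunction.dist_le (by positivity)]
    intro x
    have hx : 0 ≤ max x 0 := le_max_right _ _
    have hzw : ∀ t, ‖(fun t => z t - w t) t‖ ≤ dist z w := fun t => by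
      rw [← dist_eq_norm]; exact BoundedContinuousFunction.dist_coe_le_dist t
    have aux : ∀ (c : ℂ) (F F' : ℝ → ℂ), IntervalIntegrable F volume 0 (max x 0) →
        IntervalIntegrable F' volume 0 (max x 0) →
        (∀ t, ‖F t - F' t‖ ≤ dist z w * (E t * m t)) →
        dist ((En (max x 0) : ℂ) * (c + ∫ t in (0:ℝ)..(max x 0), F t))
          ((En (max x 0) : ℂ) * (c + ∫ t in (0:ℝ)..(max x 0), F' t)) ≤ dist z w / 2 := by
      intro c F F' hF hF' hb
      have h1 := norm_integral_le_weight hm dist_nonneg hb hx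
      have h2 : ‖(En (max x 0) : ℂ)‖ = En (max x 0) := by simp [abs_of_pos (hEnpos _)]
      rw [dist_eq_norm, ← mul_sub, norm_mul, h2, add_sub_add_left_eq_sub,
        ← intervalIntegral.integral_sub hF hF']
      exact h1
    change dist (T0 z (max x 0)) (T0 w (max x 0)) ≤ _
    have e : ((1/2 : NNReal) : ℝ) * dist z w = dist z w / 2 := by push_cast; ring
    rw [e, Prod.dist_eq, max_le_iff]
    refine ⟨aux a _ _ (hF1i z _ hx) (hF1i w _ hx) fun t => ?_,
      aux b _ _ (hF2i z _ hx) (hF2i w _ hx) fun t => ?_⟩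
    · have := hF1b _ _ hzw t
      simpa [F1, mul_sub] using this
    · have := hF2b _ _ hzw t
      simpa [F2, mul_sub] using this
  set z := ContractingWith.fixedPoint T hT with hz
  have hfix : T z = z := hT.fixedPoint_isFixedPt
  have hval : ∀ x, 0 ≤ x → z x = T0 z x := fun x hx => by
    have h1 : (T z) x = z x := by rw [hfix]
    rw [← h1]
    change T0 z (max x 0) = _
    rw [max_eq_left hx]
  have hy1 : ∀ x, 0 ≤ x → (E x : ℂ) * (z x).1 = a + ∫ t in (0:ℝ)..x, F1 z t := fun x hx => by
    rw [hval x hx]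
    have : (E x : ℂ) * (En x : ℂ) = 1 := by exact_mod_cast hEE x
    simp only [T0]
    rw [← mul_assoc, this, one_mul]
  have hy2 : ∀ x, 0 ≤ x → (E x : ℂ) * (z x).2 = b + ∫ t in (0:ℝ)..x, F2 z t := fun x hx => by
    rw [hval x hx]
    have : (E x : ℂ) * (En x : ℂ) = 1 := by exact_mod_cast hEE x
    simp only [T0]
    rw [← mul_assoc, this, one_mul]
  have h10 : (E 0 : ℂ) * (z 0).1 = a := by simpa using hy1 0 le_rfl
  have h20 : (E 0 : ℂ) * (z 0).2 = b := by simpa using hy2 0 le_rfl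
  refine ⟨fun x => (E x : ℂ) * (z x).1, fun x => (E x : ℂ) * (z x).2, ⟨⟨hF1i z, fun x hx => ?_⟩,
    ⟨fun x hx => ?_, fun x hx => ?_⟩⟩, h10, h20⟩
  · exact (hy1 x hx).trans (by rw [← h10])
  · simpa [F2] using hF2i z x hx
  · exact (hy2 x hx).trans (by rw [← h20]; simp [F2])

/-! ### The energy inequality -/

/-- The unimodular factor `exp (-i arg q / 2)`, which equals `conj p / |p|` for `p = √q`. It is
written through the logarithm so that its absolute continuity follows from the chain rule. -/
def phase (q : ℝ → ℂ) (x : ℝ) : ℂ :=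
  exp (4⁻¹ * ((starRingEnd ℂ) (log (q x)) + -1 * log (q x)))

/-- The logarithmic derivative of `phase q`. -/
def phaseLD (q q' : ℝ → ℂ) (x : ℝ) : ℂ :=
  4⁻¹ * ((starRingEnd ℂ) (q' x / q x) + -1 * (q' x / q x))

/-- The energy `Re (e^{-i arg q / 2} y' conj y)`. -/
def energy (q y y' : ℝ → ℂ) (x : ℝ) : ℝ := (phase q x * y' x * (starRingEnd ℂ) (y x)).re

lemma CondA.slit {q q' : ℝ → ℂ} {x₀ C : ℝ} (h : CondA q q' x₀ C) {x : ℝ} (hx : x₀ ≤ x) :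
    q x ∈ slitPlane := by
  obtain ⟨κ, hκ, H⟩ := h.2.2.1
  rw [mem_slitPlane_iff_arg]
  have := H x hx
  exact ⟨by have := this.2.2; intro h'; linarith, this.1⟩

lemma phase_locAC {q q' : ℝ → ℂ} {x₀ C : ℝ} (h : CondA q q' x₀ C) :
    LocACOn (phase q) (fun x => phase q x * phaseLD q q' x) x₀ := by
  have h1 : LocACOn (fun x => log (q x)) (fun x => q' x / q x) x₀ := by
    refine (h.2.1.comp isOpen_slitPlane (Φ := log) (fun z hz =>
      (differentiableAt_log hz).differentiableWithinAt) fun x hx => h.slit hx).congr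
      (fun x _ => rfl) fun x hx => ?_
    rw [(hasDerivAt_log (h.slit hx)).deriv]; ring
  exact ((h1.conj.add (h1.const_mul (-1))).const_mul 4⁻¹).cexp

lemma sqrtQ_mul_self {q : ℝ → ℂ} {x : ℝ} : sqrtQ q x * sqrtQ q x = q x := by
  have := cpow_nat_inv_pow (q x) (n := 2) two_ne_zero
  rw [← sq, sqrtQ, one_div]; exact this

lemma phase_mul_norm {q : ℝ → ℂ} {x : ℝ} (hq : q x ≠ 0) :
    phase q x * (‖sqrtQ q x‖ : ℂ) = (starRingEnd ℂ) (sqrtQ q x) := by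
  have h1 : sqrtQ q x = exp (log (q x) * (1 / 2)) := by rw [sqrtQ, cpow_def_of_ne_zero hq]
  rw [h1, Complex.norm_exp, ← exp_conj, phase, Complex.ofReal_exp, ← Complex.exp_add]
  congr 1
  have h2 : (((log (q x) * (1 / 2)).re : ℝ) : ℂ) =
      4⁻¹ * (log (q x) + (starRingEnd ℂ) (log (q x))) := by
    rw [Complex.add_conj]
    simp
    ring
  rw [h2, map_mul, map_div₀, map_one, Complex.conj_ofNat]
  ring

lemma phaseLD_le {q q' : ℝ → ℂ} {x : ℝ} :
    ‖phaseLD q q' x‖ ≤ ‖sqrtQD q q' x / sqrtQ q x‖ := by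
  have h1 : sqrtQD q q' x / sqrtQ q x = 2⁻¹ * (q' x / q x) := by
    rw [sqrtQD, ← sqrtQ_mul_self (q := q)]
    rw [div_div, mul_assoc, div_mul_eq_div_div, div_eq_mul_inv _ (2:ℂ)]
    ring
  rw [h1, phaseLD, norm_mul, norm_mul]
  have h2 := norm_add_le ((starRingEnd ℂ) (q' x / q x)) (-1 * (q' x / q x))
  rw [neg_one_mul, norm_neg, Complex.norm_conj] at h2
  rw [neg_one_mul]
  norm_num at h2 ⊢
  linarith

/-- Pointwise lower bound for the derivative of the energy: with `ω = conj p / |p|` the terms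
`Re (ω q) |Y|² + Re ω |Z|²` equal `Re p (|p| |Y|² + |Z|² / |p|)`, and the cross term coming from the
derivative of `ω` is absorbed by the arithmetic-geometric mean inequality. -/
lemma energy_pointwise {p ω m Y Z f lam q : ℂ} {k L : ℝ} (hp : 0 < p.re)
    (hω : ω * (‖p‖ : ℂ) = (starRingEnd ℂ) p) (hq : p * p = q) (hm : ‖m‖ ≤ k) (hL0 : 0 ≤ L)
    (hL : L ≤ p.re - k / 2) :
    (L ^ 2 - ‖lam‖) * ‖Y‖ ^ 2 - ‖f‖ * ‖Y‖ ≤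
      ((ω * m * Z + ω * ((q - lam) * Y - f)) * (starRingEnd ℂ) Y +
        ω * Z * (starRingEnd ℂ) Z).re := by
  have hpP : p.re ≤ ‖p‖ := (le_abs_self _).trans (abs_re_le_norm p)
  have hP : 0 < ‖p‖ := hp.trans_le hpP
  have hPc : (‖p‖ : ℂ) ≠ 0 := by exact_mod_cast hP.ne'
  have hω1 : ‖ω‖ = 1 := by
    have := congrArg norm hω
    rw [norm_mul, Complex.norm_conj, Complex.norm_real, norm_norm] at this
    exact mul_right_cancel₀ hP.ne' (by rw [this, one_mul])
  have hωe : ω = (starRingEnd ℂ) p / (‖p‖ : ℂ) := by rw [← hω]; field_simp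
  have hωq : ω * q = (‖p‖ : ℂ) * p := by
    have : (starRingEnd ℂ) p * p = (‖p‖ : ℂ) ^ 2 := by rw [mul_comm, Complex.mul_conj']
    rw [hωe, ← hq]
    field_simp
    linear_combination p * this
  have e : (ω * m * Z + ω * ((q - lam) * Y - f)) * (starRingEnd ℂ) Y + ω * Z * (starRingEnd ℂ) Z
      = ω * m * Z * (starRingEnd ℂ) Y + (ω * q) * (Y * (starRingEnd ℂ) Y)
        - ω * lam * (Y * (starRingEnd ℂ) Y) - ω * f * (starRingEnd ℂ) Y
        + ω * (Z * (starRingEnd ℂ) Z) := by ring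
  rw [e, hωq, Complex.mul_conj', Complex.mul_conj']
  have t1 : -(k * ‖Z‖ * ‖Y‖) ≤ (ω * m * Z * (starRingEnd ℂ) Y).re := by
    have := (abs_le.1 (abs_re_le_norm (ω * m * Z * (starRingEnd ℂ) Y))).1
    rw [norm_mul, norm_mul, norm_mul, Complex.norm_conj, hω1, one_mul] at this
    have h2 : ‖m‖ * ‖Z‖ * ‖Y‖ ≤ k * ‖Z‖ * ‖Y‖ := by gcongr
    linarith
  have t2 : ((‖p‖ : ℂ) * p * (‖Y‖ : ℂ) ^ 2).re = ‖p‖ * p.re * ‖Y‖ ^ 2 := by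
    rw [← Complex.ofReal_pow, Complex.re_mul_ofReal, Complex.re_ofReal_mul]
  have t3 : (ω * lam * (‖Y‖ : ℂ) ^ 2).re ≤ ‖lam‖ * ‖Y‖ ^ 2 := by
    refine (Complex.re_le_norm _).trans ?_
    rw [norm_mul, norm_mul, hω1, one_mul, norm_pow, Complex.norm_real, norm_norm]
  have t4 : (ω * f * (starRingEnd ℂ) Y).re ≤ ‖f‖ * ‖Y‖ := by
    refine (Complex.re_le_norm _).trans ?_
    rw [norm_mul, norm_mul, hω1, one_mul, Complex.norm_conj]
  have t5 : (ω * (‖Z‖ : ℂ) ^ 2).re = p.re / ‖p‖ * ‖Z‖ ^ 2 := by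
    rw [← Complex.ofReal_pow, Complex.re_mul_ofReal, hωe, Complex.div_ofReal_re, Complex.conj_re]
  simp only [Complex.add_re, Complex.sub_re]
  rw [t2, t5]
  have hk : 0 ≤ k := (norm_nonneg m).trans hm
  set A := ‖Y‖
  set B := ‖Z‖
  set P := ‖p‖
  have hB : 0 ≤ B ^ 2 / P := by positivity
  have amgm : B * A ≤ (P * A ^ 2 + B ^ 2 / P) / 2 := by
    have h1 : P * A ^ 2 + B ^ 2 / P - 2 * (B * A) = (P * A - B) ^ 2 / P := by field_simp; ring
    have h2 : 0 ≤ (P * A - B) ^ 2 / P := by positivity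
    linarith
  have h1 : L ^ 2 * A ^ 2 ≤ (p.re - k / 2) * (P * A ^ 2 + B ^ 2 / P) := by
    have hLP : L ≤ P := by linarith
    calc L ^ 2 * A ^ 2 = L * (L * A ^ 2) := by ring
      _ ≤ (p.re - k / 2) * (P * A ^ 2 + B ^ 2 / P) := by
        have : L * A ^ 2 ≤ P * A ^ 2 + B ^ 2 / P := by
          have : L * A ^ 2 ≤ P * A ^ 2 := by gcongr
          linarith
        have : 0 ≤ p.re - k / 2 := hL0.trans hL
        gcongr
  have h2 : p.re / P * B ^ 2 = p.re * (B ^ 2 / P) := by ring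
  have h3 := mul_le_mul_of_nonneg_left amgm hk
  rw [h2]
  nlinarith

lemma LocACOn.intervalIntegrable_self {f f' : ℝ → ℂ} {a x y : ℝ} (h : LocACOn f f' a) (hx : a ≤ x)
    (hy : a ≤ y) : IntervalIntegrable f volume x y := by
  refine (h.continuousOn.mono ?_).intervalIntegrable
  exact (Set.ordConnected_Ici).uIcc_subset hx hy

/-- The energy inequality: on an interval where `ρ ≥ L ≥ 0`, the growth of the energy controls the
`L²` norm of the solution. -/
lemma energy_ineq {q q' f y y' : ℝ → ℂ} {x₀ C : ℝ} (hx₀ : 0 ≤ x₀) (hA : CondA q q' x₀ C) {lam : ℂ}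
    (hy : IsSol (fun x => q x - lam) f y y') {s b L : ℝ} (hs : x₀ ≤ s) (hsb : s ≤ b)
    (hf : IntervalIntegrable f volume s b) (hL0 : 0 ≤ L)
    (hL : ∀ x ∈ Set.Icc s b, L ≤ rho q q' x) :
    (L ^ 2 - ‖lam‖) * ∫ x in s..b, ‖y x‖ ^ 2 ≤
      energy q y y' b - energy q y y' s + ∫ x in s..b, ‖f x‖ * ‖y x‖ := by
  have hy1 := hy.1.mono hx₀
  have hE := ((phase_locAC hA).mul (hy.2.mono hx₀)).mul hy1.conj
  have hbx : x₀ ≤ b := hs.trans hsb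
  have hEi := hE.intervalIntegrable hs hbx
  have hyc : ContinuousOn (fun x => ‖y x‖) (Set.uIcc s b) := by
    refine (hy1.continuousOn.mono ?_).norm
    exact (Set.ordConnected_Ici).uIcc_subset hs hbx
  have i1 : IntervalIntegrable (fun x => ‖y x‖ ^ 2) volume s b := (hyc.pow 2).intervalIntegrable
  have i2 : IntervalIntegrable (fun x => ‖f x‖ * ‖y x‖) volume s b :=
    hf.norm.mul_continuousOn hyc
  have h1 := congrArg Complex.re (hE.sub_eq hs hbx)
  have h0 := intervalIntegral.intervalIntegral_re hEi
  simp only [RCLike.re_to_complex] at h0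
  rw [Complex.sub_re, ← h0] at h1
  have h2 : (L ^ 2 - ‖lam‖) * (∫ x in s..b, ‖y x‖ ^ 2) - ∫ x in s..b, ‖f x‖ * ‖y x‖ ≤
      energy q y y' b - energy q y y' s := by
    unfold energy
    rw [h1, ← intervalIntegral.integral_const_mul,
      ← intervalIntegral.integral_sub (i1.const_mul _) i2]
    refine intervalIntegral.integral_mono_on hsb ((i1.const_mul _).sub i2)
      ⟨hEi.1.re, hEi.2.re⟩ fun x hx => ?_
    have hxx : x₀ ≤ x := hs.trans hx.1
    exact energy_pointwise (hA.2.2.2.1 x hxx) (phase_mul_norm (slitPlane_ne_zero (hA.slit hxx)))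
      sqrtQ_mul_self phaseLD_le hL0 ((hL x hx).trans (le_of_eq (by rw [rho]; ring)))
  linarith

/-! ### The square-integrable solution -/

lemma IsSol.comb {Q f g u u' v v' : ℝ → ℂ} (hu : IsSol Q f u u') (hv : IsSol Q g v v') (a b : ℂ) :
    IsSol Q (fun x => a * f x + b * g x) (fun x => a * u x + b * v x)
      (fun x => a * u' x + b * v' x) := by
  refine ⟨(hu.1.const_mul a).add (hv.1.const_mul b), ?_⟩
  exact ((hu.2.const_mul a).add (hv.2.const_mul b)).congr (fun _ _ => rfl) fun x _ => by ring

lemma IsSol.congr_rhs {Q f g u u' : ℝ → ℂ} (hu : IsSol Q f u u') (h : ∀ x, f x = g x) :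
    IsSol Q g u u' := by
  have : f = g := funext h
  rwa [← this]

lemma exists_unit_comb (z w : ℂ) : ∃ c : ℂ × ℂ, ‖c‖ = 1 ∧ c.1 * z + c.2 * w = 0 := by
  by_cases h : (w, -z) = (0 : ℂ × ℂ)
  · have h1 : w = 0 := congrArg Prod.fst h
    have h2 : z = 0 := neg_eq_zero.1 (congrArg Prod.snd h)
    exact ⟨(1, 0), by simp [Prod.norm_def], by simp [h1, h2]⟩
  · have hn : ‖(w, -z)‖ ≠ 0 := norm_ne_zero_iff.2 h
    refine ⟨((‖(w, -z)‖⁻¹ : ℝ) : ℂ) • (w, -z), ?_, ?_⟩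
    · rw [norm_smul, Complex.norm_real, norm_inv, norm_norm, inv_mul_cancel₀ hn]
    · simp only [Prod.smul_mk, smul_eq_mul]; ring

/-- A solution vanishing on the half-line has vanishing Cauchy data. -/
lemma deriv_zero_of_zero {y y' : ℝ → ℂ} {q f : ℝ → ℂ} (h : IsSol q f y y')
    (h0 : ∀ x, 0 ≤ x → y x = 0) : y' 0 = 0 := by
  have hc : ContinuousWithinAt y' (Set.Ioi 0) 0 :=
    (h.2.continuousOn 0 Set.self_mem_Ici).mono Set.Ioi_subset_Ici_self
  have hm : StronglyMeasurableAtFilter y' (𝓝[Set.Ioi 0] (0:ℝ)) := by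
    refine ⟨Set.Ioi 0, self_mem_nhdsWithin, ?_⟩
    exact (h.2.continuousOn.mono Set.Ioi_subset_Ici_self).aestronglyMeasurable measurableSet_Ioi
  have h1 : HasDerivWithinAt (fun u => ∫ t in (0:ℝ)..u, y' t) (y' 0) (Set.Ici 0) 0 :=
    intervalIntegral.integral_hasDerivWithinAt_right (h.1.1 0 le_rfl) hm hc
  have h2 : HasDerivWithinAt (fun u => ∫ t in (0:ℝ)..u, y' t) 0 (Set.Ici 0) 0 := by
    refine (hasDerivWithinAt_const (0:ℝ) (Set.Ici 0) (0:ℂ)).congr (fun x hx => ?_) (by simp)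
    rw [← h.1.sub_eq le_rfl hx, h0 x hx, h0 0 le_rfl, sub_zero]
  exact (uniqueDiffOn_Ici (0:ℝ) 0 Set.self_mem_Ici).eq_deriv _ h1 h2

/-- The Weyl solution: a limit of solutions vanishing at `n`, normalized by their Cauchy data. The
energy of the `n`-th solution increases to the value `0` at `n`, so the limit has non-positive
energy. -/
lemma exists_weyl {q q' : ℝ → ℂ} {x₀ C : ℝ} (hx₀ : 0 ≤ x₀) (hA : CondA q q' x₀ C) {lam : ℂ}
    (hQ : ∀ b, 0 ≤ b → IntervalIntegrable (fun x => q x - lam) volume 0 b) {x₁ : ℝ} (hx₁ : x₀ ≤ x₁)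
    (hr : ∀ x, x₁ ≤ x → √(1 + ‖lam‖) ≤ rho q q' x) :
    ∃ φ φ', IsSol (fun x => q x - lam) 0 φ φ' ∧ NontrivialSol φ ∧
      ∀ x, x₁ ≤ x → energy q φ φ' x ≤ 0 := by
  obtain ⟨u, u', hu, hu0, hu0'⟩ := exists_sol hQ 1 0
  obtain ⟨v, v', hv, hv0, hv0'⟩ := exists_sol hQ 0 1
  choose c hc1 hc2 using fun n : ℕ => exists_unit_comb (u n) (v n)
  obtain ⟨d, hd, k, hk, hlim⟩ := (isCompact_sphere (0 : ℂ × ℂ) 1).tendsto_subseq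
    (x := c) (fun n => by simp [hc1 n])
  have hsol : ∀ e : ℂ × ℂ, IsSol (fun x => q x - lam) 0 (fun x => e.1 * u x + e.2 * v x)
      (fun x => e.1 * u' x + e.2 * v' x) := fun e =>
    (hu.comb hv e.1 e.2).congr_rhs fun x => by simp
  refine ⟨_, _, hsol d, ?_, fun x hx => ?_⟩
  · by_contra hcon
    have hz : ∀ x, 0 ≤ x → d.1 * u x + d.2 * v x = 0 := by
      intro x hx
      by_contra hne
      exact hcon ⟨x, hx, hne⟩
    have h1 : d.1 = 0 := by simpa [hu0, hv0] using hz 0 le_rfl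
    have h2 : d.2 = 0 := by simpa [hu0', hv0'] using deriv_zero_of_zero (hsol d) hz
    have : d = 0 := Prod.ext h1 h2
    simp [this] at hd
  · have hcont : Continuous fun e : ℂ × ℂ =>
        energy q (fun x => e.1 * u x + e.2 * v x) (fun x => e.1 * u' x + e.2 * v' x) x := by
      unfold energy
      have h1 : Continuous fun e : ℂ × ℂ => e.1 * u x + e.2 * v x := by fun_prop
      have h2 : Continuous fun e : ℂ × ℂ => e.1 * u' x + e.2 * v' x := by fun_prop
      exact Complex.continuous_re.comp
        ((continuous_const.mul h2).mul (Complex.continuous_conj.comp h1))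
    refine le_of_tendsto ((hcont.tendsto d).comp hlim) ?_
    obtain ⟨N, hN⟩ := exists_nat_ge x
    filter_upwards [eventually_ge_atTop N] with n hn
    have hxn : x ≤ (k n : ℝ) := hN.trans (by exact_mod_cast hn.trans (hk.id_le n))
    have h1 := energy_ineq hx₀ hA (hsol (c (k n))) (hx₁.trans hx) hxn
      IntervalIntegrable.zero (Real.sqrt_nonneg (1 + ‖lam‖))
      (fun t ht => hr t (hx.trans ht.1))
    rw [Real.sq_sqrt (by positivity)] at h1
    have h2 : energy q (fun x => (c (k n)).1 * u x + (c (k n)).2 * v x)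
        (fun x => (c (k n)).1 * u' x + (c (k n)).2 * v' x) (k n) = 0 := by
      simp [energy, hc2]
    have h3 : 0 ≤ ∫ t in x..(k n : ℝ), ‖(c (k n)).1 * u t + (c (k n)).2 * v t‖ ^ 2 :=
      intervalIntegral.integral_nonneg hxn fun t _ => by positivity
    rw [h2] at h1
    simp only [Pi.zero_apply, norm_zero, zero_mul, intervalIntegral.integral_zero] at h1
    simp only [Function.comp]
    linarith

/-- Non-positive energy forces square integrability. -/
lemma memL2_of_energy {q q' : ℝ → ℂ} {x₀ C : ℝ} (hx₀ : 0 ≤ x₀) (hA : CondA q q' x₀ C) {lam : ℂ}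
    {x₁ : ℝ} (hx₁ : x₀ ≤ x₁) (hr : ∀ x, x₁ ≤ x → √(1 + ‖lam‖) ≤ rho q q' x)
    {φ φ' : ℝ → ℂ} (hφ : IsSol (fun x => q x - lam) 0 φ φ')
    (hen : ∀ x, x₁ ≤ x → energy q φ φ' x ≤ 0) : MemL2 (fun _ => 1) φ := by
  have hc := hφ.1.continuousOn
  refine ⟨hc.aestronglyMeasurable measurableSet_Ici, ?_⟩
  have hx₁0 : 0 ≤ x₁ := hx₀.trans hx₁
  have hc2 : ContinuousOn (fun x => ‖φ x‖ ^ 2) (Set.Ici 0) := hc.norm.pow 2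
  have h1 : IntegrableOn (fun x => ‖φ x‖ ^ 2) (Set.Icc 0 x₁) :=
    (hc2.mono Set.Icc_subset_Ici_self).integrableOn_Icc
  have h2 : IntegrableOn (fun x => ‖φ x‖ ^ 2) (Set.Ioi x₁) := by
    refine integrableOn_Ioi_of_intervalIntegral_norm_bounded (l := atTop) (b := id)
      (-energy q φ φ' x₁) x₁ (fun b => ?_) tendsto_id ?_
    · exact ((hc2.mono (Set.Icc_subset_Ici_self.trans (Set.Ici_subset_Ici.2 hx₁0))).integrableOn_Icc
        (b := b)).mono_set Set.Ioc_subset_Icc_self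
    · filter_upwards [eventually_ge_atTop x₁] with b hb
      have h1 := energy_ineq hx₀ hA hφ hx₁ hb
        IntervalIntegrable.zero (Real.sqrt_nonneg (1 + ‖lam‖)) (fun t ht => hr t ht.1)
      rw [Real.sq_sqrt (by positivity)] at h1
      simp only [Pi.zero_apply, norm_zero, zero_mul, intervalIntegral.integral_zero] at h1
      simp only [norm_pow, norm_norm, id]
      linarith [hen b hb]
  simp only [one_mul]
  rw [← Set.Icc_union_Ioi_eq_Ici hx₁0]
  exact h1.union h2

/-! ### Green's function -/

/-- Lebesgue measure on the half-line. -/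
abbrev halfLine : Measure ℝ := volume.restrict (Set.Ici (0:ℝ))

/-- The squared `L²` norm on the half-line. -/
def nsq (f : ℝ → ℂ) : ℝ := ∫ x in Set.Ici (0:ℝ), ‖f x‖ ^ 2

lemma nsq_nonneg (f : ℝ → ℂ) : 0 ≤ nsq f := integral_nonneg fun x => by positivity

lemma MemL2.memLp {f : ℝ → ℂ} (h : MemL2 (fun _ => 1) f) : MemLp f 2 halfLine := by
  rw [memLp_two_iff_integrable_sq_norm h.1]
  simpa [IntegrableOn] using h.2

lemma cauchy_schwarz {f g : ℝ → ℂ} (hf : MemLp f 2 halfLine) (hg : MemLp g 2 halfLine) :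
    ∫ x in Set.Ici (0:ℝ), ‖f x‖ * ‖g x‖ ≤ √(nsq f) * √(nsq g) := by
  have h := integral_mul_norm_le_Lp_mul_Lq Real.HolderConjugate.two_two (μ := halfLine)
    (f := f) (g := g) (by simpa using hf) (by simpa using hg)
  simpa [Real.sqrt_eq_rpow, nsq] using h

lemma integrable_prod {f g : ℝ → ℂ} (hf : MemLp f 2 halfLine) (hg : MemLp g 2 halfLine) :
    IntegrableOn (fun x => f x * g x) (Set.Ici 0) := hf.integrable_mul hg

lemma norm_setIntegral_le {f g : ℝ → ℂ} (hf : MemLp f 2 halfLine) (hg : MemLp g 2 halfLine)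
    {S : Set ℝ} (hS : S ⊆ Set.Ici 0) :
    ‖∫ x in S, f x * g x‖ ≤ √(nsq f) * √(nsq g) := by
  refine (norm_integral_le_integral_norm _).trans (le_trans ?_ (cauchy_schwarz hf hg))
  simp only [← norm_mul]
  exact setIntegral_mono_set (integrable_prod hf hg).norm
    (Eventually.of_forall fun x => norm_nonneg _) hS.eventuallyLE

lemma memLp_indicator_Icc {h : ℝ → ℂ} (hc : ContinuousOn h (Set.Ici 0)) (N : ℝ) :
    MemLp ((Set.Icc 0 N).indicator h) 2 halfLine := by
  have hc' : ContinuousOn h (Set.Icc 0 N) := hc.mono Set.Icc_subset_Ici_self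
  refine MemLp.mono_measure Measure.restrict_le_self ?_
  rw [memLp_indicator_iff_restrict measurableSet_Icc,
    memLp_two_iff_integrable_sq_norm (hc'.aestronglyMeasurable measurableSet_Icc)]
  exact (hc'.norm.pow 2).integrableOn_Icc

lemma MemLp.intervalIntegrable' {f : ℝ → ℂ} (hf : MemLp f 2 halfLine) {a b : ℝ} (ha : 0 ≤ a)
    (hb : 0 ≤ b) : IntervalIntegrable f volume a b := by
  have h1 : LocallyIntegrableOn f (Set.Ici 0) := by
    have := hf.locallyIntegrable (by norm_num)
    exact (locallyIntegrableOn_iff_locallyIntegrable_restrict isClosed_Ici).2 this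
  refine (h1.integrableOn_compact_subset ?_ isCompact_uIcc).intervalIntegrable
  exact (Set.ordConnected_Ici).uIcc_subset ha hb

/-- The coefficient `∫₀ˣ θ f` of variation of constants. -/
def greenA (θ f : ℝ → ℂ) (x : ℝ) : ℂ := ∫ t in (0:ℝ)..x, θ t * f t

/-- The coefficient `∫ₓ^∞ φ f` of variation of constants. -/
def greenB (φ f : ℝ → ℂ) (x : ℝ) : ℂ :=
  (∫ t in Set.Ici (0:ℝ), φ t * f t) - ∫ t in (0:ℝ)..x, φ t * f t

/-- The variation of constants formula `(a ∫₀ˣ θ f + b ∫ₓ^∞ φ f) / W`; with `(a, b) = (φ, θ)` it is the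
solution, and with `(a, b) = (φ', θ')` its derivative. -/
def green (a b φ θ : ℝ → ℂ) (W : ℂ) (f : ℝ → ℂ) (x : ℝ) : ℂ :=
  W⁻¹ * (a x * greenA θ f x + b x * greenB φ f x)

lemma wronskian_const {Q φ φ' θ θ' : ℝ → ℂ} (hφ : IsSol Q 0 φ φ') (hθ : IsSol Q 0 θ θ') {x : ℝ}
    (hx : 0 ≤ x) : φ x * θ' x - φ' x * θ x = φ 0 * θ' 0 - φ' 0 * θ 0 := by
  have h := ((hφ.1.mul hθ.2).add ((hφ.2.mul hθ.1).const_mul (-1))).congr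
    (g := fun x => φ x * θ' x - φ' x * θ x) (g' := fun _ => 0) (fun x _ => by ring)
    (fun x _ => by simp; ring)
  simpa using h.2 x hx

lemma green_isSol {Q φ φ' θ θ' f : ℝ → ℂ} {W : ℂ} (hφ : IsSol Q 0 φ φ') (hθ : IsSol Q 0 θ θ')
    (hW : ∀ x, 0 ≤ x → φ x * θ' x - φ' x * θ x = W) (hW0 : W ≠ 0)
    (hf : ∀ b, 0 ≤ b → IntervalIntegrable f volume 0 b) :
    IsSol Q f (green φ θ φ θ W f) (green φ' θ' φ θ W f) := by
  have hA : LocACOn (greenA θ f) (fun x => θ x * f x) 0 :=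
    ⟨fun b hb => (hf b hb).continuousOn_mul (hθ.1.continuousOn.uIcc_of_Ici hb),
      fun x _ => by simp [greenA]⟩
  have hB : LocACOn (greenB φ f) (fun x => -1 * (φ x * f x)) 0 := by
    refine ⟨fun b hb => ((hf b hb).continuousOn_mul
      (hφ.1.continuousOn.uIcc_of_Ici hb)).const_mul _, fun x _ => ?_⟩
    rw [intervalIntegral.integral_const_mul]
    simp only [greenB, intervalIntegral.integral_same]
    ring
  refine ⟨(((hφ.1.mul hA).add (hθ.1.mul hB)).const_mul W⁻¹).congr (fun _ _ => rfl) fun x _ => ?_,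
    (((hφ.2.mul hA).add (hθ.2.mul hB)).const_mul W⁻¹).congr (fun _ _ => rfl) fun x hx => ?_⟩
  · simp only [green]; ring
  · have h := hW x hx
    have h2 : W⁻¹ * (φ x * θ' x - φ' x * θ x) = 1 := by rw [h, inv_mul_cancel₀ hW0]
    simp only [green, Pi.zero_apply]
    linear_combination (-f x) * h2

lemma greenA_le {θ f : ℝ → ℂ} (hθ : ContinuousOn θ (Set.Ici 0)) (hf : MemLp f 2 halfLine) {N x : ℝ}
    (hx0 : 0 ≤ x) (hx : x ≤ N) :
    ‖greenA θ f x‖ ≤ √(nsq ((Set.Icc 0 N).indicator θ)) * √(nsq f) := by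
  rw [greenA, intervalIntegral.integral_of_le hx0]
  have : ∫ t in Set.Ioc 0 x, θ t * f t =
      ∫ t in Set.Ioc 0 x, (Set.Icc 0 N).indicator θ t * f t := by
    refine setIntegral_congr_fun measurableSet_Ioc fun t ht => ?_
    rw [Set.indicator_of_mem (show t ∈ Set.Icc 0 N from ⟨ht.1.le, ht.2.trans hx⟩)]
  rw [this]
  exact norm_setIntegral_le (memLp_indicator_Icc hθ N) hf fun t ht => ht.1.le

lemma greenB_eq {φ f : ℝ → ℂ} (hφ : MemLp φ 2 halfLine) (hf : MemLp f 2 halfLine) {x : ℝ}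
    (hx : 0 ≤ x) : greenB φ f x = ∫ t in Set.Ioi x, φ t * f t := by
  have h := integrable_prod hφ hf
  rw [greenB, integral_Ici_eq_integral_Ioi, intervalIntegral.integral_of_le hx,
    ← Set.Ioc_union_Ioi_eq_Ioi hx, setIntegral_union (Set.Ioc_disjoint_Ioi le_rfl)
      measurableSet_Ioi (h.mono_set fun t ht => ht.1.le)
      (h.mono_set fun t ht => hx.trans (le_of_lt ht))]
  ring

/-- Green's function is bounded from `L²` to bounded functions on compact intervals. -/
lemma green_bound {a b φ θ : ℝ → ℂ} {W : ℂ} (ha : ContinuousOn a (Set.Ici 0))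
    (hb : ContinuousOn b (Set.Ici 0)) (hθ : ContinuousOn θ (Set.Ici 0)) (hφ : MemLp φ 2 halfLine)
    (N : ℝ) :
    ∃ K, 0 ≤ K ∧ ∀ f, MemLp f 2 halfLine → ∀ x, 0 ≤ x → x ≤ N →
      ‖green a b φ θ W f x‖ ≤ K * √(nsq f) := by
  obtain ⟨Ka, hKa⟩ := (isCompact_Icc (a := (0:ℝ)) (b := N)).exists_bound_of_continuousOn
    (ha.mono Set.Icc_subset_Ici_self)
  obtain ⟨Kb, hKb⟩ := (isCompact_Icc (a := (0:ℝ)) (b := N)).exists_bound_of_continuousOn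
    (hb.mono Set.Icc_subset_Ici_self)
  refine ⟨‖W⁻¹‖ * (|Ka| * √(nsq ((Set.Icc 0 N).indicator θ)) + |Kb| * √(nsq φ)), by positivity,
    fun f hf x hx0 hx => ?_⟩
  have h1 := greenA_le hθ hf hx0 hx
  have h2 : ‖greenB φ f x‖ ≤ √(nsq φ) * √(nsq f) := by
    rw [greenB_eq hφ hf hx0]
    exact norm_setIntegral_le hφ hf fun t ht => hx0.trans (le_of_lt ht)
  have h3 := (hKa x ⟨hx0, hx⟩).trans (le_abs_self _)
  have h4 := (hKb x ⟨hx0, hx⟩).trans (le_abs_self _)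
  rw [green, norm_mul, mul_assoc]
  gcongr
  refine (norm_add_le _ _).trans ?_
  rw [norm_mul, norm_mul, add_mul, mul_assoc, mul_assoc]
  gcongr

lemma green_add {a b φ θ : ℝ → ℂ} {W : ℂ} (hθ : ContinuousOn θ (Set.Ici 0))
    (hφ : MemLp φ 2 halfLine) (hφc : ContinuousOn φ (Set.Ici 0)) {f g : ℝ → ℂ}
    (hf : MemLp f 2 halfLine) (hg : MemLp g 2 halfLine) {x : ℝ} (hx : 0 ≤ x) :
    green a b φ θ W (fun t => f t + g t) x = green a b φ θ W f x + green a b φ θ W g x := by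
  have e : ∀ h : ℝ → ℂ, ContinuousOn h (Set.Ici 0) →
      ∫ t in (0:ℝ)..x, h t * (f t + g t) =
        (∫ t in (0:ℝ)..x, h t * f t) + ∫ t in (0:ℝ)..x, h t * g t := fun h hh => by
    simp only [mul_add]
    exact intervalIntegral.integral_add
      ((MemLp.intervalIntegrable' hf le_rfl hx).continuousOn_mul (hh.uIcc_of_Ici hx))
      ((MemLp.intervalIntegrable' hg le_rfl hx).continuousOn_mul (hh.uIcc_of_Ici hx))
  have e2 : ∫ t in Set.Ici (0:ℝ), φ t * (f t + g t) =
      (∫ t in Set.Ici (0:ℝ), φ t * f t) + ∫ t in Set.Ici (0:ℝ), φ t * g t := by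
    simp only [mul_add]
    exact integral_add (integrable_prod hφ hf) (integrable_prod hφ hg)
  simp only [green, greenA, greenB]
  rw [e θ hθ, e φ hφc, e2]
  ring

lemma green_smul {a b φ θ : ℝ → ℂ} {W : ℂ} (c : ℂ) (f : ℝ → ℂ) (x : ℝ) :
    green a b φ θ W (fun t => c * f t) x = c * green a b φ θ W f x := by
  simp only [green, greenA, greenB, mul_left_comm _ c, integral_const_mul,
    intervalIntegral.integral_const_mul]
  ring

lemma green_congr {a b φ θ : ℝ → ℂ} {W : ℂ} {f g : ℝ → ℂ} (h : f =ᵐ[halfLine] g) {x : ℝ}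
    (hx : 0 ≤ x) : green a b φ θ W f x = green a b φ θ W g x := by
  have e : ∀ k : ℝ → ℂ, ∫ t in (0:ℝ)..x, k t * f t = ∫ t in (0:ℝ)..x, k t * g t := fun k => by
    rw [intervalIntegral.integral_of_le hx, intervalIntegral.integral_of_le hx]
    refine integral_congr_ae ?_
    filter_upwards [ae_restrict_of_ae_restrict_of_subset
      (Set.Ioc_subset_Ioi_self.trans Set.Ioi_subset_Ici_self) h] with t ht
    rw [ht]
  have e2 : ∫ t in Set.Ici (0:ℝ), φ t * f t = ∫ t in Set.Ici (0:ℝ), φ t * g t := by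
    refine integral_congr_ae ?_
    filter_upwards [h] with t ht
    rw [ht]
  simp only [green, greenA, greenB, e, e2]

/-! ### Uniform smallness of the tails -/

lemma integrable_sq_norm {f : ℝ → ℂ} (hf : MemLp f 2 halfLine) :
    Integrable (fun x => ‖f x‖ ^ 2) halfLine := (memLp_two_iff_integrable_sq_norm hf.1).1 hf

lemma memLp_trunc {f : ℝ → ℂ} (hf : MemLp f 2 halfLine) (X : ℝ) :
    MemLp ((Set.Iic X).indicator f) 2 halfLine := hf.indicator measurableSet_Iic

lemma nsq_trunc_le {f : ℝ → ℂ} (hf : MemLp f 2 halfLine) (X : ℝ) :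
    nsq ((Set.Iic X).indicator f) ≤ nsq f := by
  refine integral_mono (integrable_sq_norm (memLp_trunc hf X)) (integrable_sq_norm hf) fun x => ?_
  have := norm_indicator_le_norm_self (s := Set.Iic X) f x
  simp only
  gcongr

lemma greenB_trunc_self {φ f : ℝ → ℂ} (hφ : MemLp φ 2 halfLine) (hf : MemLp f 2 halfLine) {X : ℝ}
    (hX : 0 ≤ X) : greenB φ ((Set.Iic X).indicator f) X = 0 := by
  rw [greenB_eq hφ (memLp_trunc hf X) hX]
  refine setIntegral_eq_zero_of_forall_eq_zero fun t ht => ?_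
  rw [Set.indicator_of_notMem (by simpa using ht), mul_zero]

lemma integral_trunc (h f : ℝ → ℂ) {x X : ℝ} (hx0 : 0 ≤ x) (hx : x ≤ X) :
    ∫ t in (0:ℝ)..x, h t * (Set.Iic X).indicator f t = ∫ t in (0:ℝ)..x, h t * f t := by
  refine intervalIntegral.integral_congr fun t ht => ?_
  rw [Set.uIcc_of_le hx0] at ht
  rw [Set.indicator_of_mem (show t ∈ Set.Iic X from ht.2.trans hx)]

/-- Truncating `f` at `X` changes the solution on `[0, X]` by a multiple of `θ`. -/
lemma green_trunc {a b φ θ f : ℝ → ℂ} {W : ℂ} (hφ : MemLp φ 2 halfLine) (hf : MemLp f 2 halfLine)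
    {x X : ℝ} (hx0 : 0 ≤ x) (hx : x ≤ X) :
    green a b φ θ W f x = green a b φ θ W ((Set.Iic X).indicator f) x +
      greenB φ f X * (W⁻¹ * b x) := by
  have hX := hx0.trans hx
  have h1 := greenB_trunc_self hφ hf hX
  simp only [green, greenA, greenB, integral_trunc _ f hx0 hx, integral_trunc _ f hX le_rfl] at h1 ⊢
  linear_combination (-(W⁻¹ * b x)) * h1

lemma tendsto_greenB {φ f : ℝ → ℂ} (hφ : MemLp φ 2 halfLine) (hf : MemLp f 2 halfLine) :
    Tendsto (greenB φ f) atTop (𝓝 0) := by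
  have h := intervalIntegral_tendsto_integral_Ioi (l := atTop) (b := id) 0
    ((integrable_prod hφ hf).mono_set Set.Ioi_subset_Ici_self) tendsto_id
  have h2 := h.const_sub (∫ t in Set.Ici (0:ℝ), φ t * f t)
  rw [integral_Ici_eq_integral_Ioi, sub_self] at h2
  refine h2.congr fun X => ?_
  rw [greenB, integral_Ici_eq_integral_Ioi]; rfl

lemma norm_phase (q : ℝ → ℂ) (x : ℝ) : ‖phase q x‖ = 1 := by
  rw [phase, Complex.norm_exp, Real.exp_eq_one_iff]
  simp

lemma neg_energy_le (q y y' : ℝ → ℂ) (x : ℝ) : -energy q y y' x ≤ ‖y x‖ * ‖y' x‖ := by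
  have h := (abs_le.1 (abs_re_le_norm (phase q x * y' x * (starRingEnd ℂ) (y x)))).1
  rw [norm_mul, norm_mul, norm_phase, Complex.norm_conj, one_mul] at h
  unfold energy
  linarith

lemma integral_sq_le_nsq {f : ℝ → ℂ} (hf : MemLp f 2 halfLine) {a b : ℝ} (ha : 0 ≤ a)
    (hab : a ≤ b) : ∫ x in a..b, ‖f x‖ ^ 2 ≤ nsq f := by
  rw [intervalIntegral.integral_of_le hab]
  have h : Set.Ioc a b ⊆ Set.Ici 0 := fun t ht => ha.trans ht.1.le
  exact setIntegral_mono_set (integrable_sq_norm hf) (Eventually.of_forall fun x => by positivity)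
    h.eventuallyLE

/-- The energy inequality with the inhomogeneity absorbed. -/
lemma energy_ineq' {q q' f y y' : ℝ → ℂ} {x₀ C : ℝ} (hx₀ : 0 ≤ x₀) (hA : CondA q q' x₀ C) {lam : ℂ}
    (hy : IsSol (fun x => q x - lam) f y y') {s b M : ℝ} (hs : x₀ ≤ s) (hsb : s ≤ b)
    (hf : MemLp f 2 halfLine) (hM : 0 ≤ M)
    (hL : ∀ x ∈ Set.Icc s b, √(M + ‖lam‖) ≤ rho q q' x) :
    (M - 1 / 2) * ∫ x in s..b, ‖y x‖ ^ 2 ≤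
      energy q y y' b - energy q y y' s + 1 / 2 * ∫ x in s..b, ‖f x‖ ^ 2 := by
  have hs0 := hx₀.trans hs
  have hfi := MemLp.intervalIntegrable' hf hs0 (hs0.trans hsb)
  have h1 := energy_ineq hx₀ hA hy hs hsb hfi (Real.sqrt_nonneg (M + ‖lam‖)) hL
  rw [Real.sq_sqrt (by positivity), add_sub_cancel_right] at h1
  have hyc : ContinuousOn (fun x => ‖y x‖) (Set.uIcc s b) :=
    (hy.1.continuousOn.mono ((Set.ordConnected_Ici).uIcc_subset hs0 (hs0.trans hsb))).norm
  have i1 : IntervalIntegrable (fun x => ‖y x‖ ^ 2) volume s b := (hyc.pow 2).intervalIntegrable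
  have i2 : IntervalIntegrable (fun x => ‖f x‖ * ‖y x‖) volume s b :=
    hfi.norm.mul_continuousOn hyc
  have i3 : IntervalIntegrable (fun x => ‖f x‖ ^ 2) volume s b := by
    rw [intervalIntegrable_iff_integrableOn_Ioc_of_le hsb]
    exact IntegrableOn.mono_set (t := Set.Ici 0) (integrable_sq_norm hf)
      fun t ht => hs0.trans ht.1.le
  have h2 : ∫ x in s..b, ‖f x‖ * ‖y x‖ ≤
      1 / 2 * (∫ x in s..b, ‖f x‖ ^ 2) + 1 / 2 * ∫ x in s..b, ‖y x‖ ^ 2 := by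
    rw [← intervalIntegral.integral_const_mul, ← intervalIntegral.integral_const_mul,
      ← intervalIntegral.integral_add (i3.const_mul _) (i1.const_mul _)]
    refine intervalIntegral.integral_mono_on hsb i2 ((i3.const_mul _).add (i1.const_mul _))
      fun x _ => ?_
    nlinarith [sq_nonneg (‖f x‖ - ‖y x‖)]
  linarith

/-- Where `ρ² ≥ M + |λ|`, the `L²` mass of `G f` is at most `K ‖f‖² / M` with `K` independent of
`M`. For `f` truncated at `X` the solution is a multiple of `φ` at `X`, hence has non-positive
energy there; the general case follows by letting `X` tend to infinity. -/
lemma green_tail {q q' φ φ' θ θ' : ℝ → ℂ} {x₀ C : ℝ} (hx₀ : 0 ≤ x₀) (hA : CondA q q' x₀ C)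
    {lam W : ℂ} {x₁ : ℝ} (hx₁ : x₀ ≤ x₁) (hr : ∀ x, x₁ ≤ x → √(1 + ‖lam‖) ≤ rho q q' x)
    (hφ : IsSol (fun x => q x - lam) 0 φ φ') (hθ : IsSol (fun x => q x - lam) 0 θ θ')
    (hW : ∀ x, 0 ≤ x → φ x * θ' x - φ' x * θ x = W) (hW0 : W ≠ 0) (hφ2 : MemLp φ 2 halfLine)
    (hen : ∀ x, x₁ ≤ x → energy q φ φ' x ≤ 0) :
    ∃ K, 0 ≤ K ∧ ∀ f, MemLp f 2 halfLine → ∀ M s b : ℝ, 1 ≤ M → x₁ ≤ s → s ≤ b →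
      (∀ x, s ≤ x → √(M + ‖lam‖) ≤ rho q q' x) →
      M * ∫ x in s..b, ‖green φ θ φ θ W f x‖ ^ 2 ≤ K * nsq f := by
  obtain ⟨K1, hK1, hB1⟩ := green_bound (W := W) hφ.1.continuousOn hθ.1.continuousOn
    hθ.1.continuousOn hφ2 x₁
  obtain ⟨K2, hK2, hB2⟩ := green_bound (W := W) hφ.2.continuousOn hθ.2.continuousOn
    hθ.1.continuousOn hφ2 x₁
  refine ⟨4 * (K1 * K2 + 1 / 2), by positivity, fun f hf M s b hM hs hsb hL => ?_⟩
  have hx₁0 : 0 ≤ x₁ := hx₀.trans hx₁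
  have hs0 : 0 ≤ s := hx₁0.trans hs
  have hsol : ∀ g, MemLp g 2 halfLine → IsSol (fun x => q x - lam) g (green φ θ φ θ W g)
      (green φ' θ' φ θ W g) := fun g hg =>
    green_isSol hφ hθ hW hW0 fun b hb => MemLp.intervalIntegrable' hg le_rfl hb
  -- For truncated data the energy at `X` is non-positive and the energy at `x₁` is controlled by the
  -- pointwise bounds; the energy inequality is used with `1` on `[x₁, s]` and `M` on `[s, X]`.
  have key : ∀ X, b ≤ X → M * ∫ x in s..b, ‖green φ θ φ θ W ((Set.Iic X).indicator f) x‖ ^ 2 ≤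
      2 * (K1 * K2 + 1 / 2) * nsq f := by
    intro X hX
    have hsX := hsb.trans hX
    have hX0 := hs0.trans hsX
    set g := (Set.Iic X).indicator f with hg
    have hg2 : MemLp g 2 halfLine := memLp_trunc hf X
    set y := green φ θ φ θ W g with hy
    set y' := green φ' θ' φ θ W g with hy'
    have hyc : ContinuousOn (fun x => ‖y x‖ ^ 2) (Set.Ici 0) :=
      ((hsol g hg2).1.continuousOn).norm.pow 2
    have ii : ∀ u v, 0 ≤ u → 0 ≤ v → IntervalIntegrable (fun x => ‖y x‖ ^ 2) volume u v :=
      fun u v hu hv => (hyc.mono ((Set.ordConnected_Ici).uIcc_subset hu hv)).intervalIntegrable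
    have e1 := energy_ineq' hx₀ hA (hsol g hg2) (M := 1) hx₁ hs hg2 zero_le_one
      fun x hx => hr x hx.1
    have e2 := energy_ineq' hx₀ hA (hsol g hg2) (hx₁.trans hs) hsX hg2 (zero_le_one.trans hM)
      fun x hx => hL x hx.1
    have e3 : energy q y y' X ≤ 0 := by
      have h0 : greenB φ g X = 0 := greenB_trunc_self hφ2 hf hX0
      have h1 : energy q y y' X = ‖W⁻¹ * greenA θ g X‖ ^ 2 * energy q φ φ' X := by
        simp only [energy, hy, hy', green, h0, mul_zero, add_zero]
        rw [← Complex.re_ofReal_mul, Complex.ofReal_pow, ← Complex.mul_conj']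
        simp only [map_mul]
        congr 1
        ring
      rw [h1]
      exact mul_nonpos_of_nonneg_of_nonpos (by positivity) (hen X (hs.trans hsX))
    have e4 : -energy q y y' x₁ ≤ K1 * K2 * nsq f := by
      refine (neg_energy_le q y y' x₁).trans ?_
      have h1 := hB1 g hg2 x₁ hx₁0 le_rfl
      have h2 := hB2 g hg2 x₁ hx₁0 le_rfl
      have h3 : √(nsq g) * √(nsq g) ≤ nsq f := by
        rw [Real.mul_self_sqrt (nsq_nonneg g)]; exact nsq_trunc_le hf X
      calc ‖y x₁‖ * ‖y' x₁‖ ≤ (K1 * √(nsq g)) * (K2 * √(nsq g)) := by gcongr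
        _ = K1 * K2 * (√(nsq g) * √(nsq g)) := by ring
        _ ≤ K1 * K2 * nsq f := by gcongr
    have i3 : ∀ u v, 0 ≤ u → u ≤ v → IntervalIntegrable (fun x => ‖g x‖ ^ 2) volume u v := by
      intro u v hu huv
      rw [intervalIntegrable_iff_integrableOn_Ioc_of_le huv]
      exact IntegrableOn.mono_set (t := Set.Ici 0) (integrable_sq_norm hg2)
        fun t ht => hu.trans ht.1.le
    have e5 : (∫ x in x₁..s, ‖g x‖ ^ 2) + ∫ x in s..X, ‖g x‖ ^ 2 ≤ nsq f := by
      rw [intervalIntegral.integral_add_adjacent_intervals (i3 _ _ hx₁0 hs) (i3 _ _ hs0 hsX)]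
      exact (integral_sq_le_nsq hg2 hx₁0 (hs.trans hsX)).trans (nsq_trunc_le hf X)
    have e6 : 0 ≤ ∫ x in x₁..s, ‖y x‖ ^ 2 :=
      intervalIntegral.integral_nonneg hs fun t _ => by positivity
    have e7 : ∫ x in s..b, ‖y x‖ ^ 2 ≤ ∫ x in s..X, ‖y x‖ ^ 2 :=
      intervalIntegral.integral_mono_interval le_rfl hsb hX
        (Eventually.of_forall fun x => by positivity) (ii _ _ hs0 hX0)
    have e8 : 0 ≤ ∫ x in s..b, ‖y x‖ ^ 2 :=
      intervalIntegral.integral_nonneg hsb fun t _ => by positivity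
    have e9 : M / 2 * ∫ x in s..X, ‖y x‖ ^ 2 ≤ (M - 1 / 2) * ∫ x in s..X, ‖y x‖ ^ 2 := by
      have := e8.trans e7
      gcongr
      linarith
    have e10 : M / 2 * ∫ x in s..b, ‖y x‖ ^ 2 ≤ M / 2 * ∫ x in s..X, ‖y x‖ ^ 2 := by gcongr
    linarith
  -- Removing the truncation costs a multiple of `∫ φ f` over `[X, ∞)`, which tends to `0`.
  set D := ∫ x in s..b, ‖W⁻¹ * θ x‖ ^ 2 with hD
  have step : ∀ X, b ≤ X → M * ∫ x in s..b, ‖green φ θ φ θ W f x‖ ^ 2 ≤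
      4 * (K1 * K2 + 1 / 2) * nsq f + 2 * M * D * ‖greenB φ f X‖ ^ 2 := by
    intro X hX
    have hg2 : MemLp ((Set.Iic X).indicator f) 2 halfLine := memLp_trunc hf X
    have sub : Set.uIcc s b ⊆ Set.Ici 0 := (Set.ordConnected_Ici).uIcc_subset hs0 (hs0.trans hsb)
    have i1 : IntervalIntegrable (fun x => ‖green φ θ φ θ W f x‖ ^ 2) volume s b :=
      (((hsol f hf).1.continuousOn.mono sub).norm.pow 2).intervalIntegrable
    have i2 : IntervalIntegrable
        (fun x => ‖green φ θ φ θ W ((Set.Iic X).indicator f) x‖ ^ 2) volume s b :=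
      (((hsol _ hg2).1.continuousOn.mono sub).norm.pow 2).intervalIntegrable
    have i3 : IntervalIntegrable (fun x => ‖W⁻¹ * θ x‖ ^ 2) volume s b :=
      (((hθ.1.continuousOn.mono sub).const_mul _).norm.pow 2).intervalIntegrable
    have h1 : ∫ x in s..b, ‖green φ θ φ θ W f x‖ ^ 2 ≤
        2 * (∫ x in s..b, ‖green φ θ φ θ W ((Set.Iic X).indicator f) x‖ ^ 2) +
          2 * ‖greenB φ f X‖ ^ 2 * D := by
      rw [hD, ← intervalIntegral.integral_const_mul, ← intervalIntegral.integral_const_mul,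
        ← intervalIntegral.integral_add (i2.const_mul _) (i3.const_mul _)]
      refine intervalIntegral.integral_mono_on hsb i1 ((i2.const_mul _).add (i3.const_mul _))
        fun x hx => ?_
      rw [green_trunc hφ2 hf (hs0.trans hx.1) (hx.2.trans hX)]
      set u := green φ θ φ θ W ((Set.Iic X).indicator f) x
      have hn := norm_add_le u (greenB φ f X * (W⁻¹ * θ x))
      rw [norm_mul (greenB φ f X)] at hn
      have h2 : ‖u + greenB φ f X * (W⁻¹ * θ x)‖ ^ 2 ≤
          (‖u‖ + ‖greenB φ f X‖ * ‖W⁻¹ * θ x‖) ^ 2 := by gcongr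
      nlinarith [sq_nonneg (‖u‖ - ‖greenB φ f X‖ * ‖W⁻¹ * θ x‖)]
    have h3 := key X hX
    have hM0 : 0 ≤ M := zero_le_one.trans hM
    have h4 := mul_le_mul_of_nonneg_left h1 hM0
    linarith
  have hlim : Tendsto (fun X => 4 * (K1 * K2 + 1 / 2) * nsq f + 2 * M * D * ‖greenB φ f X‖ ^ 2)
      atTop (𝓝 (4 * (K1 * K2 + 1 / 2) * nsq f)) := by
    have := (((tendsto_greenB hφ2 hf).norm.pow 2).const_mul (2 * M * D)).const_add
      (4 * (K1 * K2 + 1 / 2) * nsq f)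
    simpa using this
  exact ge_of_tendsto hlim (by filter_upwards [eventually_ge_atTop b] with X hX using step X hX)

/-! ### A compactness criterion -/

/-- The space `L₂(ℝ₊)`. -/
abbrev HalfL2 : Type := Lp ℂ 2 halfLine

lemma norm_sq_eq_nsq (f : HalfL2) : ‖f‖ ^ 2 = nsq f := by
  have h1 := @inner_self_eq_norm_sq ℂ HalfL2 _ _ _ f
  rw [← h1, L2.inner_def, ← integral_re (L2.integrable_inner f f), nsq]
  refine integral_congr_ae (Eventually.of_forall fun x => ?_)
  exact inner_self_eq_norm_sq (𝕜 := ℂ) _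

/-- On `ℝ₊`, the step function with value `c k` on `[k / m, (k + 1) / m)` for `k < n` and `0` beyond
(the values on the negative half-line are irrelevant). -/
def stepFn (m n : ℕ) (c : Fin n → ℂ) (x : ℝ) : ℂ :=
  if h : ⌊x * m⌋₊ < n then c ⟨⌊x * m⌋₊, h⟩ else 0

lemma memLp_stepFn {m : ℕ} (hm : 0 < m) (n : ℕ) (c : Fin n → ℂ) :
    MemLp (stepFn m n c) 2 halfLine := by
  have hm' : (0:ℝ) < m := by exact_mod_cast hm
  have hmeas : Measurable (stepFn m n c) := by
    have h1 : Measurable (fun k : ℕ => if h : k < n then c ⟨k, h⟩ else 0) := measurable_from_nat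
    exact h1.comp (Nat.measurable_floor.comp (measurable_id.mul_const _))
  have hind : stepFn m n c = (Set.Iio ((n:ℝ) / m)).indicator (stepFn m n c) := by
    funext x
    by_cases hx : x ∈ Set.Iio ((n:ℝ) / m)
    · rw [Set.indicator_of_mem hx]
    · rw [Set.indicator_of_notMem hx]
      have h1 : (n:ℝ) ≤ x * m := (div_le_iff₀ hm').1 (not_lt.1 hx)
      have h2 : n ≤ ⌊x * m⌋₊ := Nat.le_floor h1
      simp [stepFn, not_lt.2 h2]
  rw [hind, memLp_indicator_iff_restrict measurableSet_Iio]
  have : IsFiniteMeasure (halfLine.restrict (Set.Iio ((n:ℝ) / m))) := by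
    refine ⟨?_⟩
    rw [Measure.restrict_apply_univ, Measure.restrict_apply measurableSet_Iio, Set.inter_comm,
      Set.Ici_inter_Iio]
    exact measure_Ico_lt_top
  refine MemLp.of_bound hmeas.aestronglyMeasurable (∑ k, ‖c k‖) (Eventually.of_forall fun x => ?_)
  unfold stepFn
  split_ifs with h
  · exact Finset.single_le_sum (f := fun k => ‖c k‖) (fun k _ => norm_nonneg _)
      (Finset.mem_univ _)
  · rw [norm_zero]; positivity

/-- Step functions as a linear map from coefficient vectors. -/
def stepMap {m : ℕ} (hm : 0 < m) (n : ℕ) : (Fin n → ℂ) →ₗ[ℂ] HalfL2 where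
  toFun c := (memLp_stepFn hm n c).toLp _
  map_add' c d := by
    rw [← MemLp.toLp_add]
    congr 1
    funext x
    simp only [stepFn, Pi.add_apply]
    split_ifs <;> simp
  map_smul' a c := by
    rw [RingHom.id_apply, ← MemLp.toLp_const_smul]
    congr 1
    funext x
    simp only [stepFn, Pi.smul_apply]
    split_ifs <;> simp

/-- An operator on `L²` given by point evaluations which depend on the point in a locally Lipschitz
way, and with uniformly small tails, is compact: sampling the evaluations on a fine grid gives
finite rank operators converging to it in norm. -/
lemma isCompactOperator_of_eval (R : HalfL2 →L[ℂ] HalfL2) (ev : ℝ → HalfL2 →L[ℂ] ℂ)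
    (hR : ∀ f, ⇑(R f) =ᵐ[halfLine] fun x => ev x f)
    (hlip : ∀ N : ℕ, ∃ K, 0 ≤ K ∧ ∀ x y : ℝ, 0 ≤ x → x ≤ y → y ≤ N → ∀ f,
      ‖ev y f - ev x f‖ ≤ K * (y - x) * ‖f‖)
    (htail : ∀ ε, 0 < ε → ∃ N : ℕ, ∀ f, ∫ x in Set.Ici (N:ℝ), ‖ev x f‖ ^ 2 ≤ ε * ‖f‖ ^ 2) :
    IsCompactOperator R := by
  have key : ∀ ε, 0 < ε → ∃ S : HalfL2 →L[ℂ] HalfL2, IsCompactOperator S ∧ ‖R - S‖ ≤ ε := by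
    intro ε hε
    obtain ⟨N, hN⟩ := htail (ε ^ 2 / 2) (by positivity)
    obtain ⟨K, hK0, hK⟩ := hlip N
    obtain ⟨m, hmlt⟩ := exists_nat_gt (max 1 (N * K ^ 2 / (ε ^ 2 / 2)))
    have hm1 : (1:ℝ) < m := (le_max_left _ _).trans_lt hmlt
    have hm0 : (0:ℝ) < m := zero_lt_one.trans hm1
    have hm : 0 < m := by exact_mod_cast hm0
    have hmK : N * (K / m) ^ 2 ≤ ε ^ 2 / 2 := by
      have h1 : N * K ^ 2 / (ε ^ 2 / 2) < m := (le_max_right _ _).trans_lt hmlt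
      rw [div_lt_iff₀ (by positivity)] at h1
      rw [div_pow, ← mul_div_assoc, div_le_iff₀ (by positivity)]
      have h2 : (m:ℝ) * (ε ^ 2 / 2) ≤ m ^ 2 * (ε ^ 2 / 2) := by
        gcongr
        nlinarith
      linarith
    let P : HalfL2 →L[ℂ] (Fin (N * m) → ℂ) := ContinuousLinearMap.pi fun k => ev (k / m)
    let T : (Fin (N * m) → ℂ) →L[ℂ] HalfL2 := LinearMap.toContinuousLinearMap (stepMap hm (N * m))
    refine ⟨T.comp P, ?_, ?_⟩
    · exact (isCompactOperator_of_locallyCompactSpace_dom P).clm_comp T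
    refine ContinuousLinearMap.opNorm_le_bound _ hε.le fun f => ?_
    have hS : ⇑(T (P f)) =ᵐ[halfLine] stepFn m (N * m) (P f) :=
      MemLp.coeFn_toLp (memLp_stepFn hm _ _)
    set d : ℝ → ℂ := fun x => ev x f - stepFn m (N * m) (P f) x with hd
    have hae : ⇑((R - T.comp P) f) =ᵐ[halfLine] d := by
      have h1 : (R - T.comp P) f = R f - T (P f) := rfl
      rw [h1]
      filter_upwards [Lp.coeFn_sub (R f) (T (P f)), hR f, hS] with x h1 h2 h3
      rw [h1, Pi.sub_apply, h2, h3]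
    have hd2 : MemLp d 2 halfLine := (memLp_congr_ae hae).1 (Lp.memLp _)
    have hdi := integrable_sq_norm hd2
    have hnorm : ‖(R - T.comp P) f‖ ^ 2 = ∫ x in Set.Ici (0:ℝ), ‖d x‖ ^ 2 := by
      rw [norm_sq_eq_nsq]
      refine integral_congr_ae ?_
      filter_upwards [hae] with x hx
      rw [hx]
    have hN0 : (0:ℝ) ≤ N := Nat.cast_nonneg N
    -- On `[0, N)` sampling on a grid of mesh `1 / m` costs at most `K / m * ‖f‖` pointwise.
    have near : ∫ x in Set.Ico (0:ℝ) N, ‖d x‖ ^ 2 ≤ N * (K / m) ^ 2 * ‖f‖ ^ 2 := by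
      have hb : ∀ x ∈ Set.Ico (0:ℝ) N, ‖d x‖ ^ 2 ≤ (K / m * ‖f‖) ^ 2 := by
        intro x hx
        have hxm : 0 ≤ x * m := mul_nonneg hx.1 hm0.le
        have hfl : (⌊x * m⌋₊ : ℝ) ≤ x * m := Nat.floor_le hxm
        have hfl2 : x * m < ⌊x * m⌋₊ + 1 := Nat.lt_floor_add_one _
        have hlt : ⌊x * m⌋₊ < N * m := by
          rw [Nat.floor_lt hxm]; push_cast; exact mul_lt_mul_of_pos_right hx.2 hm0
        have e : d x = ev x f - ev ((⌊x * m⌋₊ : ℝ) / m) f := by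
          simp only [hd, stepFn, dif_pos hlt]
          rfl
        have h1 : (⌊x * m⌋₊ : ℝ) / m ≤ x := (div_le_iff₀ hm0).2 hfl
        have h2 : x - (⌊x * m⌋₊ : ℝ) / m ≤ 1 / m := by
          rw [sub_le_iff_le_add, ← add_div, le_div_iff₀ hm0]; linarith
        have h3 := hK _ x (by positivity) h1 hx.2.le f
        rw [e]
        gcongr
        refine h3.trans ?_
        rw [div_eq_mul_one_div K]
        gcongr
      calc ∫ x in Set.Ico (0:ℝ) N, ‖d x‖ ^ 2 ≤ ∫ x in Set.Ico (0:ℝ) N, (K / m * ‖f‖) ^ 2 :=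
            setIntegral_mono_on (IntegrableOn.mono_set hdi Set.Ico_subset_Ici_self)
              (integrableOn_const (by simp)) measurableSet_Ico hb
        _ = N * (K / m) ^ 2 * ‖f‖ ^ 2 := by
            rw [setIntegral_const, measureReal_def, Real.volume_Ico, sub_zero,
              ENNReal.toReal_ofReal hN0, smul_eq_mul]
            ring
    -- Beyond `N` the step function vanishes and the tail bound applies.
    have far : ∫ x in Set.Ici (N:ℝ), ‖d x‖ ^ 2 ≤ ε ^ 2 / 2 * ‖f‖ ^ 2 := by
      refine le_trans (le_of_eq ?_) (hN f)
      refine setIntegral_congr_fun measurableSet_Ici fun x hx => ?_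
      have h1 : N * m ≤ ⌊x * m⌋₊ := by
        refine Nat.le_floor ?_
        push_cast
        exact mul_le_mul_of_nonneg_right hx hm0.le
      simp [hd, stepFn, not_lt.2 h1]
    have hsplit : ∫ x in Set.Ici (0:ℝ), ‖d x‖ ^ 2 =
        (∫ x in Set.Ico (0:ℝ) N, ‖d x‖ ^ 2) + ∫ x in Set.Ici (N:ℝ), ‖d x‖ ^ 2 := by
      rw [← Set.Ico_union_Ici_eq_Ici hN0]
      refine setIntegral_union ?_ measurableSet_Ici
        (IntegrableOn.mono_set hdi Set.Ico_subset_Ici_self)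
        (IntegrableOn.mono_set hdi (Set.Ici_subset_Ici.2 hN0))
      exact Set.disjoint_left.2 fun x hx hx' => not_lt.2 hx' hx.2
    refine le_of_sq_le_sq ?_ (by positivity)
    rw [hnorm, hsplit, mul_pow]
    have : N * (K / m) ^ 2 * ‖f‖ ^ 2 ≤ ε ^ 2 / 2 * ‖f‖ ^ 2 := by gcongr
    linarith
  have hcl : IsClosed {S : HalfL2 →L[ℂ] HalfL2 | IsCompactOperator S} :=
    isClosed_setOfPred_isCompactOperator
  have : R ∈ closure {S : HalfL2 →L[ℂ] HalfL2 | IsCompactOperator S} := by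
    refine Metric.mem_closure_iff.2 fun ε hε => ?_
    obtain ⟨S, hS, hRS⟩ := key (ε / 2) (by positivity)
    exact ⟨S, hS, by rw [dist_eq_norm]; linarith⟩
  rwa [hcl.closure_eq] at this

/-! ### The resolvent -/

lemma setIntegral_le_of_interval {y : ℝ → ℂ} (hc : ContinuousOn y (Set.Ici 0)) {a B : ℝ}
    (ha : 0 ≤ a) (hB : ∀ b, a ≤ b → ∫ x in a..b, ‖y x‖ ^ 2 ≤ B) :
    IntegrableOn (fun x => ‖y x‖ ^ 2) (Set.Ici a) ∧ ∫ x in Set.Ici a, ‖y x‖ ^ 2 ≤ B := by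
  have hc2 : ContinuousOn (fun x => ‖y x‖ ^ 2) (Set.Ici 0) := hc.norm.pow 2
  have h2 : IntegrableOn (fun x => ‖y x‖ ^ 2) (Set.Ioi a) := by
    refine integrableOn_Ioi_of_intervalIntegral_norm_bounded (l := atTop) (b := id)
      B a (fun b => ?_) tendsto_id ?_
    · exact ((hc2.mono (Set.Icc_subset_Ici_self.trans (Set.Ici_subset_Ici.2 ha))).integrableOn_Icc
        (b := b)).mono_set Set.Ioc_subset_Icc_self
    · filter_upwards [eventually_ge_atTop a] with b hb
      simpa only [norm_pow, norm_norm, id] using hB b hb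
  refine ⟨(integrableOn_Ici_iff_integrableOn_Ioi).2 h2, ?_⟩
  rw [integral_Ici_eq_integral_Ioi]
  have h3 := intervalIntegral_tendsto_integral_Ioi (l := atTop) (b := id) a h2 tendsto_id
  refine le_of_tendsto h3 ?_
  filter_upwards [eventually_ge_atTop a] with b hb using hB b hb

/-- Green's function defines a compact operator on `L₂(ℝ₊)` as soon as its tails are uniformly
small: on compact intervals it is bounded together with its derivative by `green_bound`. -/
lemma exists_compact_green {Q φ φ' θ θ' : ℝ → ℂ} {W : ℂ} (hφ : IsSol Q 0 φ φ')
    (hθ : IsSol Q 0 θ θ') (hW : ∀ x, 0 ≤ x → φ x * θ' x - φ' x * θ x = W) (hW0 : W ≠ 0)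
    (hφ2 : MemLp φ 2 halfLine)
    (htail : ∀ ε, 0 < ε → ∃ s, 0 ≤ s ∧ ∀ f, MemLp f 2 halfLine → ∀ b, s ≤ b →
      ∫ x in s..b, ‖green φ θ φ θ W f x‖ ^ 2 ≤ ε * nsq f) :
    ∃ R : HalfL2 →L[ℂ] HalfL2, IsCompactOperator R ∧
      ∀ f : HalfL2, ⇑(R f) =ᵐ[halfLine] green φ θ φ θ W f := by
  have hs : ∀ {f : ℝ → ℂ}, MemLp f 2 halfLine →
      IsSol Q f (green φ θ φ θ W f) (green φ' θ' φ θ W f) := fun hf =>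
    green_isSol hφ hθ hW hW0 fun b hb => MemLp.intervalIntegrable' hf le_rfl hb
  have hbd := fun N => green_bound (W := W) hφ.1.continuousOn hθ.1.continuousOn
    hθ.1.continuousOn hφ2 N
  have hbd' := fun N => green_bound (W := W) hφ.2.continuousOn hθ.2.continuousOn
    hθ.1.continuousOn hφ2 N
  have hsq : ∀ f : HalfL2, √(nsq f) = ‖f‖ := fun f => by
    rw [← norm_sq_eq_nsq, Real.sqrt_sq (norm_nonneg _)]
  have glob : ∃ K, 0 ≤ K ∧ ∀ f, MemLp f 2 halfLine → MemLp (green φ θ φ θ W f) 2 halfLine ∧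
      nsq (green φ θ φ θ W f) ≤ K * nsq f := by
    obtain ⟨s, hs0, ht⟩ := htail 1 one_pos
    obtain ⟨K1, hK1, hB1⟩ := hbd s
    refine ⟨s * K1 ^ 2 + 1, by positivity, fun f hf => ?_⟩
    have hc := (hs hf).1.continuousOn
    have hc2 : ContinuousOn (fun x => ‖green φ θ φ θ W f x‖ ^ 2) (Set.Ici 0) := hc.norm.pow 2
    have hii : ∀ a b, 0 ≤ a → 0 ≤ b →
        IntervalIntegrable (fun x => ‖green φ θ φ θ W f x‖ ^ 2) volume a b := fun a b ha hb =>
      (hc2.mono ((Set.ordConnected_Ici).uIcc_subset ha hb)).intervalIntegrable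
    have h0 : ∀ b, 0 ≤ b → b ≤ s → ∫ x in (0:ℝ)..b, ‖green φ θ φ θ W f x‖ ^ 2 ≤
        s * K1 ^ 2 * nsq f := by
      intro b hb hbs
      have hpt : ∀ x ∈ Set.Icc 0 b, ‖green φ θ φ θ W f x‖ ^ 2 ≤ K1 ^ 2 * nsq f := fun x hx => by
        have := hB1 f hf x hx.1 (hx.2.trans hbs)
        calc ‖green φ θ φ θ W f x‖ ^ 2 ≤ (K1 * √(nsq f)) ^ 2 := by gcongr
          _ = K1 ^ 2 * nsq f := by rw [mul_pow, Real.sq_sqrt (nsq_nonneg f)]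
      have h1 := intervalIntegral.integral_mono_on hb (hii 0 b le_rfl hb)
        _root_.intervalIntegrable_const hpt
      rw [intervalIntegral.integral_const, smul_eq_mul, sub_zero] at h1
      have := nsq_nonneg f
      calc _ ≤ b * (K1 ^ 2 * nsq f) := h1
        _ ≤ s * (K1 ^ 2 * nsq f) := by gcongr
        _ = _ := by ring
    have h1 := setIntegral_le_of_interval hc le_rfl (B := (s * K1 ^ 2 + 1) * nsq f) fun b hb => by
      have hn := nsq_nonneg f
      rcases le_total b s with hbs | hbs
      · have := h0 b hb hbs
        linarith
      · rw [← intervalIntegral.integral_add_adjacent_intervals (hii 0 s le_rfl hs0)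
          (hii s b hs0 hb)]
        have := h0 s hs0 le_rfl
        have := ht f hf b hbs
        linarith
    exact ⟨(memLp_two_iff_integrable_sq_norm (hc.aestronglyMeasurable measurableSet_Ici)).2 h1.1,
      h1.2⟩
  obtain ⟨K, hK0, hK⟩ := glob
  have hadd : ∀ f g : HalfL2, ∀ x, 0 ≤ x → green φ θ φ θ W (f + g : HalfL2) x =
      green φ θ φ θ W f x + green φ θ φ θ W g x := fun f g x hx => by
    rw [green_congr (Lp.coeFn_add f g) hx]
    exact green_add hθ.1.continuousOn hφ2 hφ.1.continuousOn (Lp.memLp f) (Lp.memLp g) hx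
  have hsmul : ∀ (c : ℂ) (f : HalfL2), ∀ x, 0 ≤ x → green φ θ φ θ W (c • f : HalfL2) x =
      c * green φ θ φ θ W f x := fun c f x hx => by
    rw [green_congr (Lp.coeFn_smul c f) hx]
    exact green_smul c f x
  have hmem : ∀ᵐ x ∂halfLine, 0 ≤ x := ae_restrict_mem measurableSet_Ici
  let L : HalfL2 →ₗ[ℂ] HalfL2 :=
    { toFun := fun f => (hK f (Lp.memLp f)).1.toLp _
      map_add' := fun f g => by
        rw [← MemLp.toLp_add]
        refine (MemLp.toLp_eq_toLp_iff _ _).2 ?_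
        filter_upwards [hmem] with x hx using hadd f g x hx
      map_smul' := fun c f => by
        rw [RingHom.id_apply, ← MemLp.toLp_const_smul]
        refine (MemLp.toLp_eq_toLp_iff _ _).2 ?_
        filter_upwards [hmem] with x hx using hsmul c f x hx }
  have hL : ∀ f : HalfL2, ⇑(L f) =ᵐ[halfLine] green φ θ φ θ W f := fun f =>
    MemLp.coeFn_toLp (hK f (Lp.memLp f)).1
  have hLb : ∀ f : HalfL2, ‖L f‖ ≤ √K * ‖f‖ := fun f => by
    refine le_of_sq_le_sq ?_ (by positivity)
    rw [mul_pow, Real.sq_sqrt hK0, norm_sq_eq_nsq, norm_sq_eq_nsq]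
    refine le_trans (le_of_eq ?_) (hK f (Lp.memLp f)).2
    refine integral_congr_ae ?_
    filter_upwards [hL f] with x hx
    rw [hx]
  let R : HalfL2 →L[ℂ] HalfL2 := L.mkContinuous (√K) hLb
  -- Point evaluations; the maximum only makes them meaningful for every real argument.
  let evL : ℝ → HalfL2 →ₗ[ℂ] ℂ := fun x =>
    { toFun := fun f => green φ θ φ θ W f (max x 0)
      map_add' := fun f g => hadd f g _ (le_max_right _ _)
      map_smul' := fun c f => hsmul c f _ (le_max_right _ _) }
  have hev : ∀ x, ∃ e : HalfL2 →L[ℂ] ℂ, ∀ f : HalfL2, e f = green φ θ φ θ W f (max x 0) := by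
    intro x
    obtain ⟨K1, -, hB1⟩ := hbd (max x 0)
    refine ⟨(evL x).mkContinuous K1 fun f => ?_, fun f => rfl⟩
    rw [← hsq f]
    exact hB1 f (Lp.memLp f) _ (le_max_right _ _) le_rfl
  choose ev hev using hev
  have hev0 : ∀ x, 0 ≤ x → ∀ f : HalfL2, ev x f = green φ θ φ θ W f x := fun x hx f => by
    rw [hev, max_eq_left hx]
  refine ⟨R, isCompactOperator_of_eval R ev (fun f => ?_) (fun N => ?_) fun ε hε => ?_, hL⟩
  · filter_upwards [hL f, hmem] with x hx hx0
    rw [hev0 x hx0]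
    exact hx
  · obtain ⟨K1, hK1, hB1⟩ := hbd' N
    refine ⟨K1, hK1, fun x y hx hxy hy f => ?_⟩
    have hy0 := hx.trans hxy
    rw [hev0 x hx, hev0 y hy0, (hs (Lp.memLp f)).1.sub_eq hx hy0]
    refine (intervalIntegral.norm_integral_le_of_norm_le_const (C := K1 * ‖f‖)
      fun t ht => ?_).trans (le_of_eq ?_)
    · rw [Set.uIoc_of_le hxy] at ht
      rw [← hsq f]
      exact hB1 f (Lp.memLp f) t (hx.trans ht.1.le) (ht.2.trans hy)
    · rw [abs_of_nonneg (sub_nonneg.2 hxy)]; ring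
  · obtain ⟨s, hs0, ht⟩ := htail ε hε
    obtain ⟨N, hN⟩ := exists_nat_ge s
    refine ⟨N, fun f => ?_⟩
    have h1 := setIntegral_le_of_interval (hs (Lp.memLp f)).1.continuousOn hs0 (ht f (Lp.memLp f))
    rw [norm_sq_eq_nsq]
    refine le_trans ?_ h1.2
    calc ∫ x in Set.Ici (N:ℝ), ‖ev x f‖ ^ 2
        = ∫ x in Set.Ici (N:ℝ), ‖green φ θ φ θ W f x‖ ^ 2 :=
          setIntegral_congr_fun measurableSet_Ici fun x hx => by
            simp only [hev0 x (hs0.trans (hN.trans hx))]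
      _ ≤ _ := setIntegral_mono_set h1.1 (Eventually.of_forall fun x => by positivity)
            (Set.Ici_subset_Ici.2 hN).eventuallyLE

/-- If `q` satisfies condition A for `x ≥ x₀` and `ρ(x) → ∞`, then for every
`lam` which is not an eigenvalue of `L_U` the resolvent is a compact
(completely continuous) operator in `L₂(ℝ₊)`. -/
theorem statement14 (q q' : ℝ → ℂ) (x₀ C : ℝ) (hx₀ : 0 ≤ x₀)
    (hA : CondA q q' x₀ C)
    (hrho : Tendsto (fun x => rho q q' x) atTop atTop)
    (α₀ α₁ : ℂ) (hα : ‖α₀‖ + ‖α₁‖ ≠ 0)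
    (lam : ℂ)
    (hnoev : ¬ ∃ y y', IsSol (fun x => q x - lam) 0 y y' ∧ NontrivialSol y ∧
      MemL2 (fun _ => 1) y ∧ α₀ * y 0 + α₁ * y' 0 = 0) :
    ∃ R : Lp ℂ 2 (volume.restrict (Set.Ici (0:ℝ))) →L[ℂ]
        Lp ℂ 2 (volume.restrict (Set.Ici (0:ℝ))),
      IsCompactOperator R ∧
      ∀ f : Lp ℂ 2 (volume.restrict (Set.Ici (0:ℝ))),
        ∃ y y', IsSol (fun x => q x - lam) (⇑f) y y' ∧
          α₀ * y 0 + α₁ * y' 0 = 0 ∧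
          (⇑(R f) : ℝ → ℂ) =ᵐ[volume.restrict (Set.Ici (0:ℝ))] y := by
  have hQ : ∀ b, 0 ≤ b → IntervalIntegrable (fun x => q x - lam) volume 0 b := fun b hb =>
    IntervalIntegrable.sub ((hA.1.integrableOn_compact_subset
      ((Set.ordConnected_Ici).uIcc_subset (le_refl (0:ℝ)) hb) isCompact_uIcc).intervalIntegrable)
      _root_.intervalIntegrable_const
  have hev : ∀ M : ℝ, ∃ s, x₀ ≤ s ∧ ∀ x, s ≤ x → √(M + ‖lam‖) ≤ rho q q' x := fun M => by
    obtain ⟨s, hs⟩ := eventually_atTop.1 (hrho.eventually_ge_atTop (√(M + ‖lam‖)))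
    exact ⟨max x₀ s, le_max_left _ _, fun x hx => hs x ((le_max_right _ _).trans hx)⟩
  obtain ⟨x₁, hx₁, hr⟩ := hev 1
  obtain ⟨φ, φ', hφ, hφn, hen⟩ := exists_weyl hx₀ hA hQ hx₁ hr
  have hφm := memL2_of_energy hx₀ hA hx₁ hr hφ hen
  obtain ⟨θ, θ', hθ, hθ0, hθ0'⟩ := exists_sol hQ α₁ (-α₀)
  -- `φ` cannot satisfy the boundary condition, so it is independent of `θ`, which does.
  have hD : α₀ * φ 0 + α₁ * φ' 0 ≠ 0 := fun h => hnoev ⟨φ, φ', hφ, hφn, hφm, h⟩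
  have hWr := fun x hx => wronskian_const hφ hθ (x := x) hx
  set W := φ 0 * θ' 0 - φ' 0 * θ 0 with hWdef
  have hW0 : W ≠ 0 := fun h => hD (by
    rw [hWdef, hθ0, hθ0'] at h
    linear_combination -h)
  obtain ⟨K, hK0, hK⟩ := green_tail hx₀ hA hx₁ hr hφ hθ hWr hW0 hφm.memLp hen
  obtain ⟨R, hRc, hR⟩ := exists_compact_green hφ hθ hWr hW0 hφm.memLp fun ε hε => by
    obtain ⟨s, hs, hsr⟩ := hev (max 1 (K / ε))
    refine ⟨max s x₁, hx₀.trans (hs.trans (le_max_left _ _)), fun f hf b hb => ?_⟩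
    have hM1 : 1 ≤ max 1 (K / ε) := le_max_left _ _
    have h := hK f hf _ _ b hM1 (le_max_right s x₁) hb
      fun x hx => hsr x ((le_max_left _ _).trans hx)
    have hKM : K ≤ max 1 (K / ε) * ε := (div_le_iff₀ hε).1 (le_max_right _ _)
    refine le_of_mul_le_mul_left (h.trans ?_) (zero_lt_one.trans_le hM1)
    rw [← mul_assoc]
    exact mul_le_mul_of_nonneg_right hKM (nsq_nonneg f)
  refine ⟨R, hRc, fun f => ⟨green φ θ φ θ W f, green φ' θ' φ θ W f,
    green_isSol hφ hθ hWr hW0 fun b hb => MemLp.intervalIntegrable' (Lp.memLp f) le_rfl hb,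
    ?_, hR f⟩⟩
  simp only [green, greenA, intervalIntegral.integral_same, hθ0, hθ0']
  ring
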